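/- Let n ≥ 3 be a natural number. The genus-zero Hurwitz number h_{2^1} with one degenerate branch point of reduced ramification type 2^1 (i.e., one permutation of cycle type (3,1^{n-3})) and m = 2n−4 simple branch points satisfies h_{2^1} = (9/2)·((2n−4)!/(n−3)!)·n^{n−5}. Equivalently, the number of tuples (σ, τ_1, …, τ_{2n−4}) of permutations of {1,…,n}, where σ has cycle type (3,1^{n-3}), each τ_i is a transposition, σ·τ_1⋯τ_{2n−4} = id, and the subgroup generated by σ, τ_1, …, τ_{2n−4} acts transitively on {1,…,n}, equals n!·(9/2)·((2n−4)!/(n−3)!)·n^{n−5}. -/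

import Mathlib

open Equiv

/-!
Remove the first transposition `(x y)` of a minimal transitive factorization of `σ`. If the
remaining transpositions still act transitively, they form a factorization of `(x y) σ`; otherwise
they fall into two transitive factorizations, of the restrictions of `(x y) σ` to complementary
invariant sets. The Riemann–Hurwitz inequality decides which case occurs: the first one when `(x y)`
joins two cycles of `σ`, the second one, with both parts again minimal, when it cuts a cycle of `σ`.
This join–cut recursion determines the number of factorizations, and Hurwitz's product formula
follows by induction on the number of transpositions once the product is shown to satisfy the same
recursion. In that identity, the sum over the distributions of the uncut cycles among the two parts
is evaluated by Abel's binomial theorem, and the sum over the positions of the cut by Lagrange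
inversion for `u = X * exp (-X)`.
The theorem combines the formula for a 3-cycle with the number `2 * n.choose 3` of 3-cycles.
-/

open Finset

section SubsetConvolution

variable {ι R : Type*} [DecidableEq ι] [CommRing R]

/-- The product of the exponential generating functions of two set functions: the sum of
`f S * g (U \ S)` over all subsets `S` of `U`. -/
def subsetConv (f g : Finset ι → R) (U : Finset ι) : R :=
  ∑ S ∈ U.powerset, f S * g (U \ S)

lemma subsetConv_comm (f g : Finset ι → R) (U : Finset ι) :
    subsetConv f g U = subsetConv g f U := by
  refine sum_nbij' (U \ ·) (U \ ·) ?_ ?_ ?_ ?_ ?_ <;> intro S hS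
  · simp
  · simp
  · exact Finset.sdiff_sdiff_eq_self (mem_powerset.mp hS)
  · exact Finset.sdiff_sdiff_eq_self (mem_powerset.mp hS)
  · rw [Finset.sdiff_sdiff_eq_self (mem_powerset.mp hS), mul_comm]

lemma subsetConv_sub_left (f₁ f₂ g : Finset ι → R) (U : Finset ι) :
    subsetConv (fun S => f₁ S - f₂ S) g U = subsetConv f₁ g U - subsetConv f₂ g U := by
  simp only [subsetConv, sub_mul, sum_sub_distrib]

lemma subsetConv_sub_right (f g₁ g₂ : Finset ι → R) (U : Finset ι) :
    subsetConv f (fun S => g₁ S - g₂ S) U = subsetConv f g₁ U - subsetConv f g₂ U := by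
  simp only [subsetConv, mul_sub, sum_sub_distrib]

lemma subsetConv_mul_left (c : R) (f g : Finset ι → R) (U : Finset ι) :
    subsetConv (fun S => c * f S) g U = c * subsetConv f g U := by
  simp only [subsetConv, mul_sum, mul_assoc]

lemma subsetConv_mul_right (c : R) (f g : Finset ι → R) (U : Finset ι) :
    subsetConv f (fun S => c * g S) U = c * subsetConv f g U := by
  simp only [subsetConv, mul_sum, mul_left_comm]

lemma subsetConv_sum_erase_right (f : Finset ι → R) (g : ι → Finset ι → R) (U : Finset ι) :
    subsetConv f (fun S => ∑ r ∈ S, g r (S.erase r)) U =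
      ∑ r ∈ U, subsetConv f (g r) (U.erase r) := by
  simp only [subsetConv, mul_sum]
  rw [sum_comm' (t' := U) (s' := fun r => (U.erase r).powerset)]
  · simp only [erase_sdiff_comm]
  · intro S r
    simp only [mem_powerset, mem_sdiff, subset_erase]
    tauto

lemma subsetConv_sum_erase_left (f : ι → Finset ι → R) (g : Finset ι → R) (U : Finset ι) :
    subsetConv (fun S => ∑ r ∈ S, f r (S.erase r)) g U =
      ∑ r ∈ U, subsetConv (f r) g (U.erase r) := by
  rw [subsetConv_comm, subsetConv_sum_erase_right]
  simp only [subsetConv_comm g]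

end SubsetConvolution

section Abel

open Polynomial

variable {ι R : Type*}

/-- The Abel polynomial of a weighted finite set `S`, evaluated at `z`. It enumerates the rooted
forests on `S`, a vertex `i` having weight `l i` for each of its children and the
ground having weight `z`. -/
def abelPoly [CommSemiring R] (l : ι → R) (z : R) (S : Finset ι) : R :=
  if #S = 0 then 1 else z * (z + ∑ i ∈ S, l i) ^ (#S - 1)

lemma abelPoly_empty [CommSemiring R] (l : ι → R) (z : R) : abelPoly l z ∅ = 1 := by
  simp [abelPoly]

lemma abelPoly_zero [CommSemiring R] (l : ι → R) {S : Finset ι} (hS : S ≠ ∅) :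
    abelPoly l 0 S = 0 := by
  simp [abelPoly, hS]

lemma abelPoly_eq_zpow {K : Type*} [Field K] (l : ι → K) {z : K} {S : Finset ι}
    (h : z + ∑ i ∈ S, l i ≠ 0) :
    abelPoly l z S = z * (z + ∑ i ∈ S, l i) ^ ((#S : ℤ) - 1) := by
  obtain rfl | hS := S.eq_empty_or_nonempty
  · rw [sum_empty, add_zero] at h
    simp [abelPoly, h]
  · obtain ⟨m, hm⟩ := Nat.exists_eq_succ_of_ne_zero hS.card_ne_zero
    simp [abelPoly, hm]

lemma abelPoly_erase_eq_zpow [DecidableEq ι] {K : Type*} [Field K] {l : ι → K} {z : K}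
    {S : Finset ι} {r : ι} (hr : r ∈ S) (h : z + ∑ i ∈ S, l i ≠ 0) :
    abelPoly l (z + l r) (S.erase r) = (z + l r) * (z + ∑ i ∈ S, l i) ^ ((#S : ℤ) - 2) := by
  have sum_erase : z + l r + ∑ i ∈ S.erase r, l i = z + ∑ i ∈ S, l i := by
    rw [add_assoc, add_sum_erase S l hr]
  rw [abelPoly_eq_zpow l (sum_erase.trans_ne h), sum_erase, card_erase_of_mem hr,
    Nat.cast_pred (card_pos.mpr ⟨r, hr⟩), sub_sub, one_add_one_eq_two]

lemma abelPoly_erase_erase_eq_zpow [DecidableEq ι] {K : Type*} [Field K] {l : ι → K} {z : K}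
    {S : Finset ι} {r t : ι} (hr : r ∈ S) (ht : t ∈ S.erase r) (h : z + ∑ i ∈ S, l i ≠ 0) :
    abelPoly l (z + l r + l t) ((S.erase r).erase t) =
      (z + l r + l t) * (z + ∑ i ∈ S, l i) ^ ((#S : ℤ) - 3) := by
  have sum_erase : z + l r + ∑ i ∈ S.erase r, l i = z + ∑ i ∈ S, l i := by
    rw [add_assoc, add_sum_erase S l hr]
  rw [abelPoly_erase_eq_zpow ht (sum_erase.trans_ne h), sum_erase, card_erase_of_mem hr,
    Nat.cast_pred (card_pos.mpr ⟨r, hr⟩), sub_sub]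
  rfl

lemma map_abelPoly {A B : Type*} [CommSemiring A] [CommSemiring B] (φ : A →+* B) (l : ι → A)
    (z : A) (S : Finset ι) : φ (abelPoly l z S) = abelPoly (fun i => φ (l i)) (φ z) S := by
  simp only [abelPoly, apply_ite φ, map_one, map_mul, map_pow, map_add, map_sum]

variable [DecidableEq ι] [CommRing R]

lemma derivative_abelPoly (l : ι → R) (z : R) (S : Finset ι) :
    derivative (abelPoly (fun i => C (l i)) (X + C z) S) =
      ∑ s ∈ S, abelPoly (fun i => C (l i)) (X + C (z + l s)) (S.erase s) := by
  obtain h | h | h : #S = 0 ∨ #S = 1 ∨ 2 ≤ #S := by lia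
  · simp [abelPoly, card_eq_zero.mp h]
  · obtain ⟨s, rfl⟩ := card_eq_one.mp h
    simp [abelPoly]
  · obtain ⟨m, hm⟩ := Nat.exists_eq_add_of_le' h
    have abelPoly_eq : abelPoly (fun i => C (l i)) (X + C z) S =
        (X + C z) * (X + C z + ∑ i ∈ S, C (l i)) ^ (m + 1) := by simp [abelPoly, hm]
    have abelPoly_erase_eq : ∀ s ∈ S, abelPoly (fun i => C (l i)) (X + C (z + l s)) (S.erase s) =
        (X + C z + C (l s)) * (X + C z + ∑ i ∈ S, C (l i)) ^ m := by
      intro s hs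
      simp [abelPoly, card_erase_of_mem hs, hm, ← add_sum_erase S _ hs, add_assoc]
    rw [abelPoly_eq, sum_congr rfl abelPoly_erase_eq]
    simp only [← sum_mul, sum_add_distrib, sum_const, hm, ← map_sum, derivative_mul,
      derivative_pow, derivative_add, derivative_X, derivative_C, nsmul_eq_mul, map_natCast,
      Nat.add_sub_cancel]
    push_cast
    ring

lemma subsetConv_abelPoly_X_add_C [IsAddTorsionFree R] (l : ι → R) (y z : R) (U : Finset ι) :
    subsetConv (abelPoly (fun i => C (l i)) (C y)) (abelPoly (fun i => C (l i)) (X + C z)) U =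
      abelPoly (fun i => C (l i)) (X + C (y + z)) U := by
  induction U using Finset.strongInduction generalizing z with
  | H U ih =>
  set L : ι → R[X] := fun i => C (l i)
  rw [← sub_eq_zero]
  set P := subsetConv (abelPoly L (C y)) (abelPoly L (X + C z)) U -
    abelPoly L (X + C (y + z)) U with hP
  have derivative_P : derivative P = 0 := by
    have derivative_summand (S : Finset ι) :
        derivative (abelPoly L (C y) S * abelPoly L (X + C z) (U \ S)) =
          abelPoly L (C y) S *
            ∑ s ∈ U \ S, abelPoly L (X + C (z + l s)) ((U \ S).erase s) := by
      rw [derivative_mul, derivative_abelPoly, ← map_abelPoly C, derivative_C, zero_mul, zero_add]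
    rw [hP, subsetConv, derivative_sub, derivative_sum,
      sum_congr rfl fun S _ => derivative_summand S, derivative_abelPoly, sub_eq_zero]
    refine (subsetConv_sum_erase_right _ (fun s => abelPoly L (X + C (z + l s))) U).trans ?_
    refine sum_congr rfl fun s hs => ?_
    rw [ih _ (erase_ssubset hs), add_assoc]
  have eval_P : P.eval (-z) = 0 := by
    simp only [hP, subsetConv, ← coe_evalRingHom, map_sub, map_sum, map_mul, map_abelPoly]
    simp only [L, coe_evalRingHom, eval_add, eval_C, eval_X, neg_add_cancel,
      neg_add_cancel_comm_assoc]
    rw [sub_eq_zero, sum_eq_single_of_mem U (mem_powerset_self U), Finset.sdiff_self,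
      abelPoly_empty, mul_one]
    intro S hS hne
    rw [abelPoly_zero l fun h => ?_, mul_zero]
    exact hne ((mem_powerset.mp hS).antisymm (sdiff_eq_empty_iff_subset.mp h))
  rw [eq_C_of_derivative_eq_zero derivative_P, eval_C] at eval_P
  rw [eq_C_of_derivative_eq_zero derivative_P, eval_P, C_0]

/-- Abel's binomial theorem. -/
theorem subsetConv_abelPoly [IsAddTorsionFree R] (l : ι → R) (y z : R) (U : Finset ι) :
    subsetConv (abelPoly l y) (abelPoly l z) U = abelPoly l (y + z) U := by
  have h := congrArg (evalRingHom 0) (subsetConv_abelPoly_X_add_C l y z U)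
  simpa only [subsetConv, map_sum, map_mul, map_abelPoly, coe_evalRingHom, eval_add, eval_C,
    eval_X, zero_add] using h

end Abel

section HurwitzKernel

variable {ι K : Type*} [Field K]

/-- The factor `(a + ∑ i ∈ S, l i) ^ (|S| - 2)` of the genus-zero Hurwitz number of the partition
with parts `a` and `l i` for `i ∈ S`. -/
def hurwitzKernel (l : ι → K) (a : K) (S : Finset ι) : K :=
  (a + ∑ i ∈ S, l i) ^ ((#S : ℤ) - 2)

variable [DecidableEq ι] [LinearOrder K] [IsStrictOrderedRing K]

lemma hurwitzKernel_eq_abelPoly {l : ι → K} {a : K} (ha : 0 < a) {S : Finset ι}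
    (hl : ∀ i ∈ S, 0 < l i) :
    hurwitzKernel l a S = (a ^ 2)⁻¹ * abelPoly l a S -
      ∑ r ∈ S, l r / (a * (a + l r)) * abelPoly l (a + l r) (S.erase r) := by
  have sum_pos : 0 < a + ∑ i ∈ S, l i :=
    add_pos_of_pos_of_nonneg ha (sum_nonneg fun i hi => (hl i hi).le)
  set n := a + ∑ i ∈ S, l i with hn
  have abelPoly_erase : ∀ r ∈ S, l r / (a * (a + l r)) * abelPoly l (a + l r) (S.erase r) =
      l r * (n ^ ((#S : ℤ) - 2) / a) := by
    intro r hr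
    have := add_pos ha (hl r hr)
    rw [abelPoly_erase_eq_zpow hr sum_pos.ne']
    field_simp
    rw [← hn]
  rw [sum_congr rfl abelPoly_erase, ← sum_mul, show ∑ i ∈ S, l i = n - a by rw [hn]; ring,
    abelPoly_eq_zpow l sum_pos.ne', ← hn, hurwitzKernel, ← hn,
    show (#S : ℤ) - 1 = (#S - 2) + 1 by ring, zpow_add_one₀ sum_pos.ne']
  field_simp
  ring

lemma subsetConv_hurwitzKernel {l : ι → K} {a b : K} (ha : 0 < a) (hb : 0 < b) {U : Finset ι}
    (hl : ∀ i ∈ U, 0 < l i) :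
    subsetConv (hurwitzKernel l a) (hurwitzKernel l b) U =
      (a ^ 2)⁻¹ * ((b ^ 2)⁻¹ * abelPoly l (a + b) U) -
      ∑ r ∈ U, ((a ^ 2)⁻¹ * (l r / (b * (b + l r))) + (b ^ 2)⁻¹ * (l r / (a * (a + l r)))) *
          abelPoly l (a + b + l r) (U.erase r) +
      ∑ r ∈ U, ∑ t ∈ U.erase r, l r / (a * (a + l r)) * (l t / (b * (b + l t))) *
          abelPoly l (a + b + l r + l t) ((U.erase r).erase t) := by
  have expand : subsetConv (hurwitzKernel l a) (hurwitzKernel l b) U =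
      subsetConv
        (fun S => (a ^ 2)⁻¹ * abelPoly l a S -
          ∑ r ∈ S, l r / (a * (a + l r)) * abelPoly l (a + l r) (S.erase r))
        (fun S => (b ^ 2)⁻¹ * abelPoly l b S -
          ∑ r ∈ S, l r / (b * (b + l r)) * abelPoly l (b + l r) (S.erase r)) U := by
    refine sum_congr rfl fun S hS => ?_
    rw [hurwitzKernel_eq_abelPoly ha fun i hi => hl i (mem_powerset.mp hS hi),
      hurwitzKernel_eq_abelPoly hb fun i hi => hl i (mem_sdiff.mp hi).1]
  rw [expand, subsetConv_sub_left,
    subsetConv_sum_erase_left (fun r S => l r / (a * (a + l r)) * abelPoly l (a + l r) S)]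
  simp only [subsetConv_mul_left, subsetConv_sub_right, subsetConv_mul_right, subsetConv_abelPoly,
    subsetConv_sum_erase_right _ (fun r S => l r / (b * (b + l r)) * abelPoly l (b + l r) S),
    ← add_assoc, add_right_comm a _ b, add_mul, sum_sub_distrib, sum_add_distrib, mul_assoc]
  simp only [mul_left_comm]
  ring

end HurwitzKernel

section LagrangeInversion

open PowerSeries

/-- The power series `exp (c X)`. -/
noncomputable def expMulX (c : ℚ) : ℚ⟦X⟧ := rescale c (exp ℚ)

lemma expMulX_mul (a b : ℚ) : expMulX a * expMulX b = expMulX (a + b) :=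
  exp_mul_exp_eq_exp_add a b

lemma coeff_expMulX (c : ℚ) (n : ℕ) : coeff n (expMulX c) = c ^ n / n.factorial := by
  simp [expMulX, coeff_rescale, coeff_exp, div_eq_mul_inv]

lemma expMulX_zero : expMulX 0 = 1 := by
  simp [expMulX]

lemma constantCoeff_expMulX (c : ℚ) : constantCoeff (expMulX c) = 1 := by
  rw [← coeff_zero_eq_constantCoeff_apply, coeff_expMulX]
  simp

lemma derivative_expMulX (c : ℚ) : d⁄dX ℚ (expMulX c) = c • expMulX c := by
  ext n
  rw [coeff_derivative, coeff_smul, coeff_expMulX, coeff_expMulX, Nat.factorial_succ, pow_succ]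
  push_cast
  rw [smul_eq_mul]
  field_simp

lemma coeff_succ_one_sub_X_mul {R : Type*} [Ring R] (n : ℕ) (F : R⟦X⟧) :
    coeff (n + 1) ((1 - X) * F) = coeff (n + 1) F - coeff n F := by
  rw [sub_mul, one_mul, map_sub, coeff_succ_X_mul]

/-- The coefficient of `u ^ n` in the expansion of a power series in powers of `u = X * exp (-X)`,
in the form that Lagrange inversion gives to it. -/
noncomputable def lagrangeCoeff (n : ℕ) : ℚ⟦X⟧ →ₗ[ℚ] ℚ :=
  coeff n ∘ₗ LinearMap.mulLeft ℚ ((1 - X) * expMulX n)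

lemma lagrangeCoeff_apply (n : ℕ) (F : ℚ⟦X⟧) :
    lagrangeCoeff n F = coeff n ((1 - X) * (expMulX n * F)) := by
  simp [lagrangeCoeff]

lemma lagrangeCoeff_zero (F : ℚ⟦X⟧) : lagrangeCoeff 0 F = constantCoeff F := by
  simp [lagrangeCoeff_apply, expMulX_zero]

lemma lagrangeCoeff_X_pow_mul {n N : ℕ} (h : n < N) (F : ℚ⟦X⟧) :
    lagrangeCoeff n (X ^ N * F) = 0 := by
  have product_eq : (1 - X) * (expMulX n * (X ^ N * F)) = X ^ N * ((1 - X) * (expMulX n * F)) := by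
    ring
  rw [lagrangeCoeff_apply, product_eq, coeff_X_pow_mul', if_neg h.not_ge]

/-- The compositional inverse `X * exp (-X)` of the exponential generating function of rooted
trees. -/
noncomputable def treeInverse : ℚ⟦X⟧ := X * expMulX (-1)

lemma treeInverse_pow (j : ℕ) : treeInverse ^ j = X ^ j * expMulX (-j) := by
  have expMulX_pow : expMulX (-1) ^ j = expMulX (-j) := by
    induction j with
    | zero => simp [expMulX_zero]
    | succ j ih => rw [pow_succ, ih, expMulX_mul]; congr 1; push_cast; ring
  rw [treeInverse, mul_pow, expMulX_pow]

lemma lagrangeCoeff_treeInverse_pow (n j : ℕ) :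
    lagrangeCoeff n (treeInverse ^ j) = if n = j then 1 else 0 := by
  have product_eq : (1 - X) * (expMulX n * (X ^ j * expMulX (-j))) =
      X ^ j * ((1 - X) * expMulX ((n : ℚ) - j)) := by
    rw [sub_eq_add_neg (n : ℚ), ← expMulX_mul]; ring
  rw [lagrangeCoeff_apply, treeInverse_pow, product_eq, coeff_X_pow_mul']
  obtain h | rfl | h := lt_trichotomy n j
  · rw [if_neg h.not_ge, if_neg h.ne]
  · simp [expMulX_zero]
  · obtain ⟨d, rfl⟩ := Nat.exists_eq_add_of_lt h
    rw [if_pos h.le, if_neg h.ne', add_assoc, Nat.add_sub_cancel_left, coeff_succ_one_sub_X_mul,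
      coeff_expMulX, coeff_expMulX, Nat.factorial_succ]
    push_cast
    field_simp
    ring

lemma exists_eq_sum_treeInverse_pow_add (F : ℚ⟦X⟧) (N : ℕ) :
    ∃ G, F = ∑ j ∈ range N, lagrangeCoeff j F • treeInverse ^ j + X ^ N * G := by
  induction N with
  | zero => exact ⟨F, by simp⟩
  | succ N ih =>
    obtain ⟨G, hG⟩ := ih
    set c := constantCoeff G
    obtain ⟨G', hG'⟩ : X ∣ G - c • expMulX (-N) := by
      rw [X_dvd_iff, map_sub, constantCoeff_smul, constantCoeff_expMulX, smul_eq_mul, mul_one,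
        sub_self]
    have split_G : X ^ N * G = c • treeInverse ^ N + X ^ (N + 1) * G' := by
      rw [treeInverse_pow, pow_succ, mul_assoc (X ^ N), ← hG', mul_sub, mul_smul_comm,
        add_sub_cancel]
    have coeff_eq : lagrangeCoeff N F = c := by
      conv_lhs => rw [hG, split_G]
      simp +contextual [lagrangeCoeff_treeInverse_pow, lagrangeCoeff_X_pow_mul, sum_ite_eq]
    exact ⟨G', by rw [sum_range_succ, coeff_eq, add_assoc, ← split_G, ← hG]⟩

lemma lagrangeCoeff_mul (n : ℕ) (F G : ℚ⟦X⟧) :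
    lagrangeCoeff n (F * G) =
      ∑ p ∈ HasAntidiagonal.antidiagonal n, lagrangeCoeff p.1 F * lagrangeCoeff p.2 G := by
  obtain ⟨F', hF⟩ := exists_eq_sum_treeInverse_pow_add F (n + 1)
  obtain ⟨G', hG⟩ := exists_eq_sum_treeInverse_pow_add G (n + 1)
  set A := ∑ j ∈ range (n + 1), lagrangeCoeff j F • treeInverse ^ j with hA
  set B := ∑ j ∈ range (n + 1), lagrangeCoeff j G • treeInverse ^ j with hB
  have product_eq :
      F * G = A * B + X ^ (n + 1) * (F' * B + A * G' + X ^ (n + 1) * F' * G') := by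
    rw [hF, hG]; ring
  rw [product_eq, map_add, lagrangeCoeff_X_pow_mul n.lt_succ_self, add_zero, hA, hB, sum_mul_sum]
  simp only [map_sum, smul_mul_smul_comm, ← pow_add, map_smul, lagrangeCoeff_treeInverse_pow,
    smul_eq_mul, mul_ite, mul_one, mul_zero]
  rw [← sum_product', ← sum_filter]
  refine sum_congr ?_ fun _ _ => rfl
  ext ⟨i, j⟩
  simp only [mem_filter, mem_product, mem_range, HasAntidiagonal.mem_antidiagonal]
  lia

/-- Lagrange inversion in its differentiated form. -/
lemma succ_mul_lagrangeCoeff_succ (m : ℕ) (F : ℚ⟦X⟧) :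
    ((m + 1 : ℕ) : ℚ) * lagrangeCoeff (m + 1) F =
      coeff m (expMulX ((m + 1 : ℕ) : ℚ) * d⁄dX ℚ F) := by
  have h := coeff_derivative (expMulX ((m + 1 : ℕ) : ℚ) * F) m
  rw [Derivation.leibniz, derivative_expMulX, smul_eq_mul, smul_eq_mul, map_add, mul_smul_comm,
    coeff_smul, smul_eq_mul, mul_comm F] at h
  rw [lagrangeCoeff_apply, coeff_succ_one_sub_X_mul]
  push_cast at h ⊢
  linear_combination -h

lemma lagrangeCoeff_mul_eq_zero {a b m : ℕ} {F G : ℚ⟦X⟧} (hF : ∀ i ≤ a, lagrangeCoeff i F = 0)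
    (hG : ∀ j ≤ b, lagrangeCoeff j G = 0) (hm : m ≤ a + b) : lagrangeCoeff m (F * G) = 0 := by
  rw [lagrangeCoeff_mul]
  refine sum_eq_zero fun p hp => mul_eq_zero.mpr ?_
  rw [HasAntidiagonal.mem_antidiagonal] at hp
  exact (le_or_gt p.1 a).imp (hF _) fun h => hG _ (by lia)

end LagrangeInversion

section TreeSeries

open PowerSeries

/-- The weight `a ^ (a + 1) / a!` of a cycle of length `a` in the Hurwitz formula. -/
def hurwitzWeight (a : ℕ) : ℚ := (a : ℚ) ^ (a + 1) / a.factorial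

/-- The number `a ^ a / a!`, set to zero at `a = 0` (by division by zero). -/
def endoCoeff (a : ℕ) : ℚ := hurwitzWeight a / a

lemma hurwitzWeight_zero : hurwitzWeight 0 = 0 := by simp [hurwitzWeight]

lemma hurwitzWeight_ne_zero {a : ℕ} (ha : 0 < a) : hurwitzWeight a ≠ 0 := by
  have : 0 < hurwitzWeight a := by unfold hurwitzWeight; positivity
  exact this.ne'

lemma endoCoeff_zero : endoCoeff 0 = 0 := by simp [endoCoeff]

lemma endoCoeff_succ (a : ℕ) : endoCoeff (a + 1) = ((a + 1 : ℕ) : ℚ) ^ a / a.factorial := by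
  rw [endoCoeff, hurwitzWeight, Nat.factorial_succ]
  push_cast
  rw [pow_succ, pow_succ]
  field_simp

lemma mul_endoCoeff (a : ℕ) : a * endoCoeff a = hurwitzWeight a := by
  obtain rfl | ha := eq_or_ne a 0
  · simp [hurwitzWeight]
  · rw [endoCoeff]; field_simp

/-- The antiderivative of `treeInverse ^ r` without constant term. -/
noncomputable def treePrimitive (r : ℕ) : ℚ⟦X⟧ :=
  mk fun n => coeff (n - 1) (treeInverse ^ r) / n

lemma constantCoeff_treePrimitive (r : ℕ) : constantCoeff (treePrimitive r) = 0 := by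
  rw [← coeff_zero_eq_constantCoeff_apply, treePrimitive, coeff_mk, Nat.cast_zero, div_zero]

lemma derivative_treePrimitive (r : ℕ) : d⁄dX ℚ (treePrimitive r) = treeInverse ^ r := by
  ext n
  rw [coeff_derivative, treePrimitive, coeff_mk, Nat.add_sub_cancel]
  push_cast
  field_simp

lemma treePrimitive_zero : treePrimitive 0 = X :=
  derivative.ext (by rw [derivative_treePrimitive, pow_zero, derivative_X])
    (by rw [constantCoeff_treePrimitive, constantCoeff_X])

lemma lagrangeCoeff_treePrimitive (r m : ℕ) :
    lagrangeCoeff m (treePrimitive r) = endoCoeff (m - r) / m := by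
  obtain _ | m := m
  · rw [lagrangeCoeff_zero, constantCoeff_treePrimitive, Nat.cast_zero, div_zero]
  · rw [eq_div_iff (by positivity), mul_comm, succ_mul_lagrangeCoeff_succ,
      derivative_treePrimitive, treeInverse_pow, mul_left_comm, expMulX_mul, coeff_X_pow_mul']
    split_ifs with h
    · obtain ⟨d, rfl⟩ := Nat.exists_eq_add_of_le h
      rw [show r + d + 1 - r = d + 1 by lia, endoCoeff_succ, Nat.add_sub_cancel_left, coeff_expMulX]
      push_cast
      ring
    · rw [Nat.sub_eq_zero_of_le (by lia), endoCoeff_zero]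

lemma lagrangeCoeff_treePrimitive_eq_zero {r m : ℕ} (h : m ≤ r) :
    lagrangeCoeff m (treePrimitive r) = 0 := by
  rw [lagrangeCoeff_treePrimitive, Nat.sub_eq_zero_of_le h, endoCoeff_zero, zero_div]

/-- The sums over the ways of cutting a cycle of length `k` in two that occur in the cut term of
the join–cut recursion. -/
def cutSum (k r t : ℕ) : ℚ :=
  ∑ p ∈ HasAntidiagonal.antidiagonal k, endoCoeff p.1 / (p.1 + r) * (endoCoeff p.2 / (p.2 + t))

lemma cutSum_comm (k r t : ℕ) : cutSum k r t = cutSum k t r := by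
  rw [cutSum, cutSum, ← Nat.sum_antidiagonal_swap]
  exact sum_congr rfl fun _ _ => mul_comm _ _

lemma lagrangeCoeff_treePrimitive_mul_treePrimitive (k r t : ℕ) :
    lagrangeCoeff (k + r + t) (treePrimitive r * treePrimitive t) = cutSum k r t := by
  rw [lagrangeCoeff_mul, cutSum]
  symm
  refine sum_of_injOn (fun p => (p.1 + r, p.2 + t)) ?_ ?_ ?_ ?_
  · rintro ⟨a, b⟩ - ⟨c, d⟩ - h
    simpa using h
  · rintro ⟨a, b⟩ hp
    rw [mem_coe, HasAntidiagonal.mem_antidiagonal] at hp ⊢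
    lia
  · rintro ⟨a, b⟩ hp not_shifted
    rw [HasAntidiagonal.mem_antidiagonal] at hp
    have small : a ≤ r ∨ b ≤ t := by
      by_contra! h
      refine not_shifted ⟨(a - r, b - t), ?_, ?_⟩
      · rw [mem_coe, HasAntidiagonal.mem_antidiagonal]
        lia
      · change (a - r + r, b - t + t) = (a, b)
        rw [Nat.sub_add_cancel h.1.le, Nat.sub_add_cancel h.2.le]
    exact mul_eq_zero.mpr (small.imp lagrangeCoeff_treePrimitive_eq_zero
      lagrangeCoeff_treePrimitive_eq_zero)
  · rintro ⟨a, b⟩ -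
    rw [lagrangeCoeff_treePrimitive, lagrangeCoeff_treePrimitive, Nat.add_sub_cancel,
      Nat.add_sub_cancel, Nat.cast_add, Nat.cast_add]

lemma cutSum_zero_zero {k : ℕ} (hk : 0 < k) :
    cutSum k 0 0 = 2 * endoCoeff k * (k - 1) / k ^ 2 := by
  obtain ⟨m, rfl⟩ := Nat.exists_eq_add_of_le' hk
  have derivative_eq := succ_mul_lagrangeCoeff_succ m (X * X)
  rw [← treePrimitive_zero, lagrangeCoeff_treePrimitive_mul_treePrimitive (m + 1) 0 0,
    treePrimitive_zero, Derivation.leibniz, derivative_X, smul_eq_mul, mul_one, ← two_nsmul,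
    mul_smul_comm, mul_comm (expMulX _), map_nsmul, nsmul_eq_mul] at derivative_eq
  rw [eq_div_iff (by positivity)]
  obtain _ | d := m
  · simpa using derivative_eq
  · rw [coeff_succ_X_mul, coeff_expMulX] at derivative_eq
    rw [endoCoeff_succ, Nat.factorial_succ]
    push_cast at derivative_eq ⊢
    rw [pow_two, ← mul_assoc, mul_comm (cutSum _ _ _), derivative_eq, pow_succ]
    field_simp
    ring

open Polynomial in
/-- The exponential series `exp (r X)` truncated after degree `r`. -/
noncomputable def truncExp (r : ℕ) : ℚ[X] := trunc (r + 1) (expMulX r)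

lemma natDegree_truncExp_le (r : ℕ) : (truncExp r).natDegree ≤ r :=
  Nat.lt_succ_iff.mp (natDegree_trunc_lt _ _)

lemma coeff_truncExp {r m : ℕ} (h : m ≤ r) : (truncExp r).coeff m = r ^ m / m.factorial := by
  rw [truncExp, coeff_trunc, if_pos (by lia), coeff_expMulX]

lemma coeff_zero_reflect_truncExp {r : ℕ} (hr : 0 < r) :
    ((truncExp r).reflect r).coeff 0 = endoCoeff r := by
  rw [Polynomial.coeff_reflect, Polynomial.revAt_le r.zero_le, Nat.sub_zero, coeff_truncExp le_rfl,
    endoCoeff, hurwitzWeight, pow_succ]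
  field_simp

lemma coeff_one_reflect_truncExp {r : ℕ} (hr : 0 < r) :
    ((truncExp r).reflect r).coeff 1 = endoCoeff r := by
  obtain ⟨m, rfl⟩ := Nat.exists_eq_add_of_le' hr
  rw [Polynomial.coeff_reflect, Polynomial.revAt_le hr, Nat.add_sub_cancel,
    coeff_truncExp m.le_succ, endoCoeff_succ]

lemma coeff_two_reflect_truncExp {r : ℕ} (hr : 0 < r) :
    ((truncExp r).reflect r).coeff 2 = endoCoeff r * (1 - 1 / r) := by
  obtain rfl | h := eq_or_lt_of_le (Nat.one_le_iff_ne_zero.mpr hr.ne')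
  · rw [Polynomial.coeff_reflect, Polynomial.revAt_eq_self_of_lt one_lt_two,
      Polynomial.coeff_eq_zero_of_natDegree_lt ((natDegree_truncExp_le 1).trans_lt one_lt_two)]
    simp
  · obtain ⟨m, rfl⟩ := Nat.exists_eq_add_of_le' h
    rw [Polynomial.coeff_reflect, Polynomial.revAt_le h, Nat.add_sub_cancel,
      coeff_truncExp (by lia), endoCoeff_succ, Nat.factorial_succ, pow_succ]
    push_cast
    field_simp
    ring

lemma lagrangeCoeff_expMulX_neg_mul_coe {N : ℕ} (hN : 0 < N) (P : Polynomial ℚ) :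
    lagrangeCoeff N (expMulX (-N) * (P : ℚ⟦X⟧)) =
      (P.reflect N).coeff 0 - (P.reflect N).coeff 1 := by
  obtain ⟨m, rfl⟩ := Nat.exists_eq_add_of_le' hN
  rw [lagrangeCoeff_apply, ← mul_assoc (expMulX _), expMulX_mul, add_neg_cancel, expMulX_zero,
    one_mul, coeff_succ_one_sub_X_mul, Polynomial.coeff_coe, Polynomial.coeff_coe,
    Polynomial.coeff_reflect, Polynomial.coeff_reflect, Polynomial.revAt_le (Nat.zero_le _),
    Polynomial.revAt_le hN, Nat.sub_zero, Nat.add_sub_cancel]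

lemma lagrangeCoeff_X_mul_expMulX_neg_mul_coe {N : ℕ} (hN : 2 ≤ N) (P : Polynomial ℚ) :
    lagrangeCoeff N (X * (expMulX (-N) * (P : ℚ⟦X⟧))) =
      (P.reflect N).coeff 1 - (P.reflect N).coeff 2 := by
  obtain ⟨m, rfl⟩ := Nat.exists_eq_add_of_le' hN
  rw [lagrangeCoeff_apply, mul_left_comm (expMulX _), ← mul_assoc (expMulX _), expMulX_mul,
    add_neg_cancel, expMulX_zero, one_mul, coeff_succ_one_sub_X_mul, coeff_succ_X_mul,
    coeff_succ_X_mul, Polynomial.coeff_coe, Polynomial.coeff_coe,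
    Polynomial.coeff_reflect, Polynomial.coeff_reflect, Polynomial.revAt_le (by lia),
    Polynomial.revAt_le hN, Nat.add_sub_cancel]
  rfl

lemma derivative_truncExp (r : ℕ) : d⁄dX ℚ (truncExp r : ℚ⟦X⟧) =
    (r : ℚ) • ((truncExp r : ℚ⟦X⟧) - C (endoCoeff r) * X ^ r) := by
  obtain rfl | hr := eq_or_ne r 0
  · simp [truncExp, trunc_one_left]
  · have top_coeff : (r : ℚ) ^ r / r.factorial = endoCoeff r := by
      rw [endoCoeff, hurwitzWeight, pow_succ]
      field_simp
    rw [truncExp, derivative_coe, ← trunc_derivative, derivative_expMulX, map_smul, trunc_succ,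
      coeff_expMulX, top_coeff, Polynomial.coe_smul, Polynomial.coe_add, Polynomial.coe_monomial,
      monomial_eq_C_mul_X_pow, add_sub_cancel_right]

/-- The power series that represents the integral of `treeInverse ^ r` from `X` to infinity; the
constant `r! / r ^ (r + 1)` is the integral from `0` to infinity. -/
noncomputable def treeTail (r : ℕ) : ℚ⟦X⟧ := C (hurwitzWeight r)⁻¹ - treePrimitive r

lemma treeTail_eq {r : ℕ} (hr : 0 < r) :
    treeTail r = (hurwitzWeight r)⁻¹ • (expMulX (-r) * truncExp r) := by
  have weight_ne := hurwitzWeight_ne_zero hr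
  apply derivative.ext
  · rw [treeTail, map_sub, derivative_C, derivative_treePrimitive, treeInverse_pow, zero_sub,
      Derivation.map_smul, Derivation.leibniz, derivative_expMulX, derivative_truncExp, smul_eq_mul,
      smul_eq_mul, eq_inv_smul_iff₀ weight_ne, ← mul_endoCoeff]
    simp only [smul_eq_C_mul, map_mul, map_neg]
    ring
  · rw [treeTail, map_sub, constantCoeff_treePrimitive, constantCoeff_C, sub_zero,
      constantCoeff_smul, map_mul, constantCoeff_expMulX, Polynomial.constantCoeff_coe,
      coeff_truncExp r.zero_le]
    simp

lemma treeTail_mul_treeTail {k r : ℕ} (hk : 0 < k) (hr : 0 < r) :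
    treeTail k * treeTail r = ((hurwitzWeight k)⁻¹ * (hurwitzWeight r)⁻¹) •
      (expMulX (-(k + r : ℕ)) * ((truncExp k * truncExp r : Polynomial ℚ) : ℚ⟦X⟧)) := by
  rw [treeTail_eq hk, treeTail_eq hr, smul_mul_smul_comm, mul_mul_mul_comm, expMulX_mul,
    Polynomial.coe_mul, Nat.cast_add, neg_add]

lemma treeTail_mul_treeTail_mul_treeTail {k r t : ℕ} (hk : 0 < k) (hr : 0 < r) (ht : 0 < t) :
    treeTail k * treeTail r * treeTail t =
      ((hurwitzWeight k)⁻¹ * (hurwitzWeight r)⁻¹ * (hurwitzWeight t)⁻¹) •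
        (expMulX (-(k + r + t : ℕ)) *
          ((truncExp k * truncExp r * truncExp t : Polynomial ℚ) : ℚ⟦X⟧)) := by
  rw [treeTail_mul_treeTail hk hr, treeTail_eq ht, smul_mul_smul_comm, mul_mul_mul_comm,
    expMulX_mul, Polynomial.coe_mul _ (truncExp t), Nat.cast_add (k + r), neg_add]

lemma lagrangeCoeff_X_mul_treeTail_mul_treeTail {k r : ℕ} (hk : 0 < k) (hr : 0 < r) :
    lagrangeCoeff (k + r) (X * (treeTail k * treeTail r)) =
      1 / (k * r) * (1 / k + 1 / r - 1) := by
  rw [treeTail_mul_treeTail hk hr, mul_smul_comm, map_smul,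
    lagrangeCoeff_X_mul_expMulX_neg_mul_coe (by lia),
    Polynomial.reflect_mul _ _ (natDegree_truncExp_le k) (natDegree_truncExp_le r),
    Polynomial.coeff_mul _ _ 2, Polynomial.mul_coeff_one,
    Finset.Nat.sum_antidiagonal_eq_sum_range_succ_mk]
  simp only [sum_range_succ, sum_range_zero, zero_add, Nat.sub_zero, Nat.reduceSub]
  rw [coeff_zero_reflect_truncExp hk, coeff_zero_reflect_truncExp hr, coeff_one_reflect_truncExp hk,
    coeff_one_reflect_truncExp hr, coeff_two_reflect_truncExp hk, coeff_two_reflect_truncExp hr,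
    endoCoeff, endoCoeff, smul_eq_mul]
  have weight_k_ne := hurwitzWeight_ne_zero hk
  have weight_r_ne := hurwitzWeight_ne_zero hr
  field_simp
  ring

lemma lagrangeCoeff_treeTail_mul_treeTail_mul_treeTail {k r t : ℕ} (hk : 0 < k) (hr : 0 < r)
    (ht : 0 < t) :
    lagrangeCoeff (k + r + t) (treeTail k * treeTail r * treeTail t) = -2 / (k * r * t) := by
  have natDegree_le : (truncExp k * truncExp r).natDegree ≤ k + r :=
    Polynomial.natDegree_mul_le_of_le (natDegree_truncExp_le k) (natDegree_truncExp_le r)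
  rw [treeTail_mul_treeTail_mul_treeTail hk hr ht, map_smul,
    lagrangeCoeff_expMulX_neg_mul_coe (by lia),
    Polynomial.reflect_mul _ _ natDegree_le (natDegree_truncExp_le t),
    Polynomial.reflect_mul _ _ (natDegree_truncExp_le k) (natDegree_truncExp_le r)]
  simp only [Polynomial.mul_coeff_zero, Polynomial.mul_coeff_one, coeff_zero_reflect_truncExp, hk,
    hr, ht, coeff_one_reflect_truncExp, endoCoeff, smul_eq_mul]
  have weight_k_ne := hurwitzWeight_ne_zero hk
  have weight_r_ne := hurwitzWeight_ne_zero hr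
  have weight_t_ne := hurwitzWeight_ne_zero ht
  field_simp
  ring

lemma lagrangeCoeff_treePrimitive_mul_treePrimitive_eq_zero {r t m : ℕ} (h : m ≤ r + t) :
    lagrangeCoeff m (treePrimitive r * treePrimitive t) = 0 :=
  lagrangeCoeff_mul_eq_zero (fun _ => lagrangeCoeff_treePrimitive_eq_zero)
    (fun _ => lagrangeCoeff_treePrimitive_eq_zero) h

-- Expand the product of the tails: the products of two primitives contribute the cut sums, while
-- the product of all the primitives vanishes to the order that is read off.
lemma cutSum_add_cutSum {k r : ℕ} (hk : 0 < k) (hr : 0 < r) :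
    (hurwitzWeight k)⁻¹ * cutSum k 0 r + (hurwitzWeight r)⁻¹ * cutSum r 0 k =
      (hurwitzWeight k)⁻¹ * (hurwitzWeight r)⁻¹ * (endoCoeff (k + r) / (k + r)) -
        1 / (k * r) * (1 / k + 1 / r - 1) := by
  have expansion : X * (treeTail k * treeTail r) =
      ((hurwitzWeight k)⁻¹ * (hurwitzWeight r)⁻¹) • treePrimitive 0 -
        (hurwitzWeight k)⁻¹ • (treePrimitive 0 * treePrimitive r) -
        (hurwitzWeight r)⁻¹ • (treePrimitive 0 * treePrimitive k) +
        treePrimitive 0 * (treePrimitive k * treePrimitive r) := by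
    simp only [treeTail, treePrimitive_zero, smul_eq_C_mul, map_mul]
    ring
  have triple_eq_zero :
      lagrangeCoeff (k + r) (treePrimitive 0 * (treePrimitive k * treePrimitive r)) = 0 :=
    lagrangeCoeff_mul_eq_zero (a := 0) (fun _ => lagrangeCoeff_treePrimitive_eq_zero)
      (fun _ => lagrangeCoeff_treePrimitive_mul_treePrimitive_eq_zero) (zero_add _).ge
  have pair_r := lagrangeCoeff_treePrimitive_mul_treePrimitive k 0 r
  have pair_k := lagrangeCoeff_treePrimitive_mul_treePrimitive r 0 k
  have value := lagrangeCoeff_X_mul_treeTail_mul_treeTail hk hr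
  rw [add_zero] at pair_r pair_k
  rw [expansion, map_add, map_sub, map_sub, map_smul, map_smul, map_smul, triple_eq_zero, pair_r,
    add_comm k r, pair_k, lagrangeCoeff_treePrimitive, Nat.sub_zero, add_comm r k] at value
  push_cast at value
  simp only [smul_eq_mul] at value
  linear_combination -value

lemma cutSum_add_cutSum_add_cutSum {k r t : ℕ} (hk : 0 < k) (hr : 0 < r) (ht : 0 < t) :
    (hurwitzWeight k)⁻¹ * cutSum k r t + (hurwitzWeight r)⁻¹ * cutSum r k t +
        (hurwitzWeight t)⁻¹ * cutSum t k r =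
      -2 / (k * r * t) + 1 / (k + r + t) *
        ((hurwitzWeight k)⁻¹ * (hurwitzWeight r)⁻¹ * endoCoeff (k + r) +
          (hurwitzWeight k)⁻¹ * (hurwitzWeight t)⁻¹ * endoCoeff (k + t) +
          (hurwitzWeight r)⁻¹ * (hurwitzWeight t)⁻¹ * endoCoeff (r + t)) := by
  set a := (hurwitzWeight k)⁻¹ with ha
  set b := (hurwitzWeight r)⁻¹ with hb
  set c := (hurwitzWeight t)⁻¹ with hc
  have expansion : treeTail k * treeTail r * treeTail t =
      C (a * b * c) + a • (treePrimitive r * treePrimitive t) +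
        b • (treePrimitive k * treePrimitive t) + c • (treePrimitive k * treePrimitive r) -
        (a * b) • treePrimitive t - (a * c) • treePrimitive r - (b * c) • treePrimitive k -
        treePrimitive k * treePrimitive r * treePrimitive t := by
    simp only [treeTail, ← ha, ← hb, ← hc, smul_eq_C_mul, map_mul]
    ring
  have constant_eq_zero : lagrangeCoeff (k + r + t) (C (a * b * c)) = 0 := by
    obtain ⟨m, hm⟩ := Nat.exists_eq_add_of_le' (show 1 ≤ k + r + t by lia)
    have derivative_eq := succ_mul_lagrangeCoeff_succ m (C (a * b * c))
    rw [derivative_C, mul_zero, map_zero, ← hm] at derivative_eq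
    exact (mul_eq_zero.mp derivative_eq).resolve_left (by positivity)
  have triple_eq_zero :
      lagrangeCoeff (k + r + t) (treePrimitive k * treePrimitive r * treePrimitive t) = 0 :=
    lagrangeCoeff_mul_eq_zero
      (fun _ => lagrangeCoeff_treePrimitive_mul_treePrimitive_eq_zero)
      (fun _ => lagrangeCoeff_treePrimitive_eq_zero) le_rfl
  have pair_k := lagrangeCoeff_treePrimitive_mul_treePrimitive k r t
  have pair_r := lagrangeCoeff_treePrimitive_mul_treePrimitive r k t
  have pair_t := lagrangeCoeff_treePrimitive_mul_treePrimitive t k r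
  rw [add_comm r k] at pair_r
  rw [show t + k + r = k + r + t by ring] at pair_t
  have value := lagrangeCoeff_treeTail_mul_treeTail_mul_treeTail hk hr ht
  simp only [expansion, map_add, map_sub, map_smul, constant_eq_zero, triple_eq_zero, pair_k,
    pair_r, pair_t, lagrangeCoeff_treePrimitive, Nat.add_sub_cancel, smul_eq_mul,
    show k + r + t - r = k + t by lia, show k + r + t - k = r + t by lia] at value
  push_cast at value
  linear_combination value

end TreeSeries

section Symmetrization

variable {ι R : Type*} [DecidableEq ι] {I : Finset ι}

lemma sum_sum_erase_comm [AddCommMonoid R] (F : ι → ι → R) :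
    ∑ i ∈ I, ∑ j ∈ I.erase i, F i j = ∑ i ∈ I, ∑ j ∈ I.erase i, F j i :=
  sum_comm' fun i j => by simp only [mem_erase]; tauto

lemma sum_sum_erase_sum_erase_rotate [AddCommMonoid R] (F : ι → ι → ι → R) :
    ∑ i ∈ I, ∑ r ∈ I.erase i, ∑ t ∈ (I.erase i).erase r, F i r t =
      ∑ i ∈ I, ∑ r ∈ I.erase i, ∑ t ∈ (I.erase i).erase r, F r t i := by
  calc
    _ = ∑ i ∈ I, ∑ r ∈ I.erase i, ∑ t ∈ (I.erase i).erase r, F i t r :=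
      sum_congr rfl fun i _ => sum_sum_erase_comm (F i)
    _ = _ := by
      rw [sum_sum_erase_comm]
      simp only [erase_right_comm]

variable [Field R] [CharZero R]

lemma sum_sum_erase_congr_of_add {F H : ι → ι → R}
    (h : ∀ i ∈ I, ∀ r ∈ I.erase i, F i r + F r i = H i r + H r i) :
    ∑ i ∈ I, ∑ r ∈ I.erase i, F i r = ∑ i ∈ I, ∑ r ∈ I.erase i, H i r := by
  have sum_eq : ∑ i ∈ I, ∑ r ∈ I.erase i, (F i r + F r i) =
      ∑ i ∈ I, ∑ r ∈ I.erase i, (H i r + H r i) :=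
    sum_congr rfl fun i hi => sum_congr rfl fun r hr => h i hi r hr
  simp only [sum_add_distrib, ← sum_sum_erase_comm F, ← sum_sum_erase_comm H] at sum_eq
  linear_combination sum_eq / 2

lemma sum_sum_erase_sum_erase_congr_of_add {F H : ι → ι → ι → R}
    (h : ∀ i ∈ I, ∀ r ∈ I.erase i, ∀ t ∈ (I.erase i).erase r,
      F i r t + F r t i + F t i r = H i r t + H r t i + H t i r) :
    ∑ i ∈ I, ∑ r ∈ I.erase i, ∑ t ∈ (I.erase i).erase r, F i r t =
      ∑ i ∈ I, ∑ r ∈ I.erase i, ∑ t ∈ (I.erase i).erase r, H i r t := by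
  have sum_eq :
      ∑ i ∈ I, ∑ r ∈ I.erase i, ∑ t ∈ (I.erase i).erase r, (F i r t + F r t i + F t i r) =
        ∑ i ∈ I, ∑ r ∈ I.erase i, ∑ t ∈ (I.erase i).erase r, (H i r t + H r t i + H t i r) :=
    sum_congr rfl fun i hi => sum_congr rfl fun r hr => sum_congr rfl fun t ht => h i hi r hr t ht
  simp only [sum_add_distrib, ← sum_sum_erase_sum_erase_rotate F,
    ← sum_sum_erase_sum_erase_rotate H, sum_sum_erase_sum_erase_rotate fun i r t => F t i r,
    sum_sum_erase_sum_erase_rotate fun i r t => H t i r] at sum_eq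
  linear_combination sum_eq / 3

end Symmetrization

section JoinCutIdentity

variable {ι : Type*} [DecidableEq ι] {l : ι → ℕ}

lemma hurwitzWeight_mul_subsetConv_hurwitzKernel {k a b : ℕ} (hab : a + b = k) {U : Finset ι}
    (hl : ∀ i ∈ U, 0 < l i) :
    hurwitzWeight a * hurwitzWeight b * subsetConv (hurwitzKernel (fun i => (l i : ℚ)) a)
        (hurwitzKernel (fun i => (l i : ℚ)) b) U =
      (k + ∑ i ∈ U, (l i : ℚ)) ^ ((#U : ℤ) - 3) *
        (k * (k + ∑ i ∈ U, (l i : ℚ)) ^ 2 * (endoCoeff a / a * (endoCoeff b / b)) -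
          (k + ∑ i ∈ U, (l i : ℚ)) * ∑ r ∈ U, l r * (k + l r) *
            (endoCoeff a / a * (endoCoeff b / (b + l r)) +
              endoCoeff a / (a + l r) * (endoCoeff b / b)) +
          ∑ r ∈ U, ∑ t ∈ U.erase r, l r * l t * (k + l r + l t) *
            (endoCoeff a / (a + l r) * (endoCoeff b / (b + l t)))) := by
  obtain rfl | ha := Nat.eq_zero_or_pos a
  · simp [hurwitzWeight_zero, endoCoeff_zero]
  obtain rfl | hb := Nat.eq_zero_or_pos b
  · simp [hurwitzWeight_zero, endoCoeff_zero]
  have k_pos : 0 < k := by lia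
  set n : ℚ := k + ∑ i ∈ U, (l i : ℚ) with hn
  have n_ne : n ≠ 0 := by positivity
  have k_eq : (a : ℚ) + b = k := by exact_mod_cast hab
  have a_pos : (0 : ℚ) < a := by exact_mod_cast ha
  have b_pos : (0 : ℚ) < b := by exact_mod_cast hb
  have zpow_eq₁ : n ^ ((#U : ℤ) - 1) = n ^ 2 * n ^ ((#U : ℤ) - 3) := by
    rw [← zpow_natCast, ← zpow_add₀ n_ne]
    push_cast
    ring_nf
  have zpow_eq₂ : n ^ ((#U : ℤ) - 2) = n * n ^ ((#U : ℤ) - 3) := by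
    rw [← zpow_one_add₀ n_ne]
    ring_nf
  rw [subsetConv_hurwitzKernel a_pos b_pos fun i hi => by exact_mod_cast hl i hi, k_eq,
    abelPoly_eq_zpow _ n_ne, ← hn, zpow_eq₁, ← mul_endoCoeff, ← mul_endoCoeff]
  simp only [mul_add, mul_sub, mul_sum]
  refine congr_arg₂ _ (congr_arg₂ _ ?_ (sum_congr rfl fun r hr => ?_))
    (sum_congr rfl fun r hr => sum_congr rfl fun t ht => ?_)
  · field_simp
  · rw [abelPoly_erase_eq_zpow hr n_ne, ← hn, zpow_eq₂]
    field_simp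
  · rw [abelPoly_erase_erase_eq_zpow hr ht n_ne, ← hn]
    field_simp

lemma sum_hurwitzWeight_mul_subsetConv_hurwitzKernel {k : ℕ} {U : Finset ι}
    (hl : ∀ i ∈ U, 0 < l i) :
    ∑ p ∈ HasAntidiagonal.antidiagonal k, hurwitzWeight p.1 * hurwitzWeight p.2 *
        subsetConv (hurwitzKernel (fun i => (l i : ℚ)) p.1)
          (hurwitzKernel (fun i => (l i : ℚ)) p.2) U =
      (k + ∑ i ∈ U, (l i : ℚ)) ^ ((#U : ℤ) - 3) *
        (k * (k + ∑ i ∈ U, (l i : ℚ)) ^ 2 * cutSum k 0 0 -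
          2 * (k + ∑ i ∈ U, (l i : ℚ)) * ∑ r ∈ U, l r * (k + l r) * cutSum k 0 (l r) +
          ∑ r ∈ U, ∑ t ∈ U.erase r, l r * l t * (k + l r + l t) * cutSum k (l r) (l t)) := by
  rw [sum_congr rfl fun p hp => hurwitzWeight_mul_subsetConv_hurwitzKernel
    (HasAntidiagonal.mem_antidiagonal.mp hp) hl, ← mul_sum, sum_add_distrib, sum_sub_distrib,
    ← mul_sum, ← mul_sum, sum_comm, sum_comm (t := U), mul_comm 2, mul_assoc _ 2, mul_sum _ _ 2]
  refine congr_arg _ (congr_arg₂ _ (congr_arg₂ _ ?_ (congr_arg _ (sum_congr rfl fun r _ => ?_)))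
    (sum_congr rfl fun r _ => ?_))
  · simp only [cutSum, Nat.cast_zero, add_zero]
  · have swap := cutSum_comm k 0 (l r)
    simp only [cutSum, Nat.cast_zero, add_zero] at swap ⊢
    rw [← mul_sum, sum_add_distrib, swap]
    ring
  · rw [sum_comm]
    exact sum_congr rfl fun t _ => (mul_sum _ _ _).symm

variable {I : Finset ι}

lemma sum_erase_natCast {i : ι} (hi : i ∈ I) :
    ∑ r ∈ I.erase i, (l r : ℚ) = ∑ j ∈ I, (l j : ℚ) - l i :=
  eq_sub_of_add_eq' (add_sum_erase I (fun j => (l j : ℚ)) hi)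

lemma cast_card_erase {i : ι} (hi : i ∈ I) : (#(I.erase i) : ℚ) = #I - 1 :=
  eq_sub_of_add_eq (by exact_mod_cast card_erase_add_one hi)

lemma sum_sum_cutSum (hl : ∀ i ∈ I, 0 < l i) :
    ∑ i ∈ I, ∑ r ∈ I.erase i, (endoCoeff (l i))⁻¹ * (l r * (l i + l r) * cutSum (l i) 0 (l r)) =
      (∑ i ∈ I, ∑ r ∈ I.erase i, endoCoeff (l i + l r) / (endoCoeff (l i) * endoCoeff (l r))) / 2 +
        (∑ i ∈ I, (l i : ℚ)) * (#I - 1 - ∑ i ∈ I, 1 / (l i : ℚ)) - #I * (#I - 2) := by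
  set n := ∑ i ∈ I, (l i : ℚ) with hn
  set J : ι → ι → ℚ := fun i r => endoCoeff (l i + l r) / (endoCoeff (l i) * endoCoeff (l r))
  calc
    _ = ∑ i ∈ I, ∑ r ∈ I.erase i, (J i r / 2 - 1 - (l r : ℚ) / l i + l i) := by
      refine sum_sum_erase_congr_of_add fun i hi r hr => ?_
      have i_pos := hl i hi
      have r_pos := hl r (mem_of_mem_erase hr)
      have weight_i_ne := hurwitzWeight_ne_zero i_pos
      have weight_r_ne := hurwitzWeight_ne_zero r_pos
      have identity := cutSum_add_cutSum i_pos r_pos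
      simp only [J, add_comm (l r) (l i), endoCoeff, Nat.cast_add] at identity ⊢
      field_simp at identity ⊢
      linear_combination (2 * ((l i : ℚ) + l r)) * identity
    _ = ∑ i ∈ I, ((∑ r ∈ I.erase i, J i r) / 2 - (#I - 2) - n * (1 / l i) + (#I - 1) * l i) := by
      refine sum_congr rfl fun i hi => ?_
      have i_pos := hl i hi
      rw [sum_add_distrib, sum_sub_distrib, sum_sub_distrib, ← sum_div, ← sum_div,
        sum_erase_natCast hi, sum_const, sum_const, nsmul_eq_mul, nsmul_eq_mul, cast_card_erase hi,
        ← hn]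
      field_simp
      ring
    _ = _ := by
      rw [sum_add_distrib, sum_sub_distrib, sum_sub_distrib, ← sum_div, ← mul_sum, ← mul_sum, ← hn,
        sum_const, nsmul_eq_mul]
      ring

lemma sum_sum_sum_cutSum (hl : ∀ i ∈ I, 0 < l i) :
    ∑ i ∈ I, ∑ r ∈ I.erase i, ∑ t ∈ (I.erase i).erase r, (endoCoeff (l i))⁻¹ *
        (l r * l t * (l i + l r + l t) * cutSum (l i) (l r) (l t)) =
      ∑ i ∈ I, ∑ r ∈ I.erase i, (∑ j ∈ I, (l j : ℚ) - l i - l r) *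
          (endoCoeff (l i + l r) / (endoCoeff (l i) * endoCoeff (l r))) -
        2 * (∑ i ∈ I, (l i : ℚ)) * (#I - 1) * (#I - 2) := by
  set n := ∑ i ∈ I, (l i : ℚ) with hn
  set J : ι → ι → ℚ := fun i r => endoCoeff (l i + l r) / (endoCoeff (l i) * endoCoeff (l r))
  calc
    _ = ∑ i ∈ I, ∑ r ∈ I.erase i, ∑ t ∈ (I.erase i).erase r, (l t * J i r - 2 * l i) := by
      refine sum_sum_erase_sum_erase_congr_of_add fun i hi r hr t ht => ?_
      have i_pos := hl i hi
      have r_pos := hl r (mem_of_mem_erase hr)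
      have t_pos := hl t (mem_of_mem_erase (mem_of_mem_erase ht))
      have weight_i_ne := hurwitzWeight_ne_zero i_pos
      have weight_r_ne := hurwitzWeight_ne_zero r_pos
      have weight_t_ne := hurwitzWeight_ne_zero t_pos
      have identity := cutSum_add_cutSum_add_cutSum i_pos r_pos t_pos
      simp only [J, add_comm (l t) (l i), cutSum_comm (l r) (l t), endoCoeff,
        Nat.cast_add] at identity ⊢
      field_simp at identity ⊢
      linear_combination identity
    _ = ∑ i ∈ I, (∑ r ∈ I.erase i, (n - l i - l r) * J i r - 2 * (#I - 1) * (#I - 2) * l i) := by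
      refine sum_congr rfl fun i hi => ?_
      have sum_eq : ∀ r ∈ I.erase i, ∑ t ∈ (I.erase i).erase r, (l t * J i r - 2 * l i) =
          (n - l i - l r) * J i r - 2 * (#I - 2) * l i := fun r hr => by
        rw [sum_sub_distrib, ← sum_mul, sum_erase_natCast hr, sum_erase_natCast hi, sum_const,
          nsmul_eq_mul, cast_card_erase hr, cast_card_erase hi, ← hn]
        ring
      rw [sum_congr rfl sum_eq, sum_sub_distrib, sum_const, nsmul_eq_mul, cast_card_erase hi]
      ring
    _ = _ := by
      rw [sum_sub_distrib, ← mul_sum, ← hn]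
      ring

lemma sum_join_term (hl : ∀ i ∈ I, 0 < l i) (N : ℚ) :
    ∑ i ∈ I, ∑ j ∈ I.erase i, l i * l j *
        (hurwitzWeight (l i + l j) / (hurwitzWeight (l i) * hurwitzWeight (l j))) * N =
      N * ∑ i ∈ I, ∑ j ∈ I.erase i, ((l i : ℚ) + l j) *
        (endoCoeff (l i + l j) / (endoCoeff (l i) * endoCoeff (l j))) := by
  simp only [mul_sum, ← mul_endoCoeff]
  refine sum_congr rfl fun i hi => sum_congr rfl fun j hj => ?_
  have i_pos := hl i hi
  have j_pos := hl j (mem_of_mem_erase hj)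
  push_cast
  field_simp

lemma cut_term_eq (hl : ∀ i ∈ I, 0 < l i) {n : ℚ} (hn : n = ∑ i ∈ I, (l i : ℚ)) {i : ι}
    (hi : i ∈ I) :
    l i / hurwitzWeight (l i) * ∑ p ∈ HasAntidiagonal.antidiagonal (l i),
        hurwitzWeight p.1 * hurwitzWeight p.2 *
          subsetConv (hurwitzKernel (fun i => (l i : ℚ)) p.1)
            (hurwitzKernel (fun i => (l i : ℚ)) p.2) (I.erase i) =
      n ^ ((#I : ℤ) - 4) * (2 * n ^ 2 * (1 - 1 / l i) -
        2 * n * ∑ r ∈ I.erase i, (endoCoeff (l i))⁻¹ * (l r * (l i + l r) * cutSum (l i) 0 (l r)) +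
        ∑ r ∈ I.erase i, ∑ t ∈ (I.erase i).erase r, (endoCoeff (l i))⁻¹ *
          (l r * l t * (l i + l r + l t) * cutSum (l i) (l r) (l t))) := by
  have i_pos := hl i hi
  have weight_ne := hurwitzWeight_ne_zero i_pos
  have exponent_eq : (#(I.erase i) : ℤ) - 3 = #I - 4 := by
    rw [← card_erase_add_one hi]
    push_cast
    ring
  rw [sum_hurwitzWeight_mul_subsetConv_hurwitzKernel fun j hj => hl j (mem_of_mem_erase hj),
    add_sum_erase I (fun j => (l j : ℚ)) hi, ← hn, exponent_eq, cutSum_zero_zero i_pos]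
  simp only [← mul_sum, endoCoeff]
  field_simp

lemma joinCut_identity (hI : I.Nonempty) (hl : ∀ i ∈ I, 0 < l i) {n : ℚ}
    (hn : n = ∑ i ∈ I, (l i : ℚ)) :
    2 * (n + #I - 2) * n ^ ((#I : ℤ) - 3) =
      ∑ i ∈ I, ∑ j ∈ I.erase i, l i * l j *
          (hurwitzWeight (l i + l j) / (hurwitzWeight (l i) * hurwitzWeight (l j))) *
            n ^ ((#I : ℤ) - 4) +
        ∑ i ∈ I, l i / hurwitzWeight (l i) * ∑ p ∈ HasAntidiagonal.antidiagonal (l i),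
          hurwitzWeight p.1 * hurwitzWeight p.2 *
            subsetConv (hurwitzKernel (fun i => (l i : ℚ)) p.1)
              (hurwitzKernel (fun i => (l i : ℚ)) p.2) (I.erase i) := by
  have n_pos : 0 < n := hn ▸ sum_pos (fun i hi => Nat.cast_pos.mpr (hl i hi)) hI
  have zpow_eq : n ^ ((#I : ℤ) - 3) = n ^ ((#I : ℤ) - 4) * n := by
    rw [← zpow_add_one₀ n_pos.ne']
    ring_nf
  have double := sum_sum_cutSum hl
  have triple := sum_sum_sum_cutSum hl
  rw [← hn] at double triple
  rw [sum_join_term hl, sum_congr rfl fun i hi => cut_term_eq hl hn hi, zpow_eq, ← mul_sum,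
    sum_add_distrib, sum_sub_distrib, ← mul_sum, ← mul_sum, double, triple, sum_sub_distrib,
    sum_const, nsmul_one]
  simp only [sub_mul, add_mul, sum_sub_distrib, sum_add_distrib, ← mul_sum]
  ring

end JoinCutIdentity

section Words

variable {β γ : Type*} {A : Finset β} {P Q : List β → Prop} {m : ℕ} {w : List β}

/-- The words of length `m` in the alphabet `A`. -/
def words (A : Finset β) (m : ℕ) : Finset (List β) :=
  (Fintype.piFinset fun _ : Fin m => A).map ⟨List.ofFn, List.ofFn_injective⟩

lemma mem_words : w ∈ words A m ↔ w.length = m ∧ ∀ p ∈ w, p ∈ A := by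
  simp only [words, mem_map, Fintype.mem_piFinset, Function.Embedding.coeFn_mk]
  constructor
  · rintro ⟨τ, hτ, rfl⟩
    exact ⟨List.length_ofFn, List.forall_mem_ofFn_iff.mpr hτ⟩
  · rintro ⟨rfl, hw⟩
    exact ⟨w.get, fun i => hw _ (List.get_mem w i), List.ofFn_get w⟩

open scoped Classical in
/-- The number of words of length `m` in the alphabet `A` that satisfy `P`. -/
noncomputable def wordCount (A : Finset β) (P : List β → Prop) (m : ℕ) : ℕ :=
  #{w ∈ words A m | P w}

lemma wordCount_eq_natCard (A : Finset β) (P : List β → Prop) (m : ℕ) :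
    wordCount A P m = Nat.card {τ : Fin m → β // (∀ i, τ i ∈ A) ∧ P (List.ofFn τ)} := by
  classical
  rw [wordCount, words, filter_map, card_map, ← Nat.subtype_card]
  simp [Fintype.mem_piFinset]

lemma wordCount_ne_zero_iff :
    wordCount A P m ≠ 0 ↔ ∃ w : List β, w.length = m ∧ (∀ p ∈ w, p ∈ A) ∧ P w := by
  classical
  simp only [wordCount, card_ne_zero, Finset.Nonempty, mem_filter, mem_words, and_assoc]

lemma wordCount_congr {A' : Finset β} {P' : List β → Prop}
    (h : ∀ w, ((∀ p ∈ w, p ∈ A) ∧ P w) ↔ ((∀ p ∈ w, p ∈ A') ∧ P' w)) :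
    wordCount A P m = wordCount A' P' m := by
  classical
  refine congr_arg card (ext fun w => ?_)
  simp only [mem_filter, mem_words, and_assoc, h w]

lemma wordCount_or (h : ∀ w, P w → ¬ Q w) :
    wordCount A (fun w => P w ∨ Q w) m = wordCount A P m + wordCount A Q m := by
  classical
  simp only [wordCount]
  rw [← card_union_of_disjoint (disjoint_filter.mpr fun w _ => h w)]
  refine congr_arg card (ext fun w => ?_)
  simp only [mem_filter, mem_union, and_or_left]

lemma wordCount_exists {s : Finset γ} {P : γ → List β → Prop}
    (h : ∀ w, ∀ c ∈ s, ∀ d ∈ s, P c w → P d w → c = d) :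
    wordCount A (fun w => ∃ c ∈ s, P c w) m = ∑ c ∈ s, wordCount A (P c) m := by
  classical
  simp only [wordCount]
  rw [← card_biUnion]
  · refine congr_arg card (ext fun w => ?_)
    simp only [mem_filter, mem_biUnion]
    tauto
  · intro c hc d hd hcd
    exact disjoint_filter.mpr fun w _ hcw hdw => hcd (h w c hc d hd hcw hdw)

lemma wordCount_zero (A : Finset β) (P : List β → Prop) [Decidable (P [])] :
    wordCount A P 0 = if P [] then 1 else 0 := by
  classical
  have words_zero : words A 0 = {[]} := by
    ext w
    simp +contextual [mem_words]
  rw [wordCount, words_zero, filter_singleton]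
  split_ifs <;> rfl

lemma wordCount_succ (A : Finset β) (P : List β → Prop) (m : ℕ) :
    wordCount A P (m + 1) = ∑ p ∈ A, wordCount A (fun w => P (p :: w)) m := by
  classical
  simp only [wordCount]
  rw [← card_sigma]
  symm
  refine card_bij (fun q _ => q.1 :: q.2) ?_ ?_ ?_
  · rintro ⟨p, w⟩ h
    simp only [mem_sigma, mem_filter, mem_words] at h ⊢
    exact ⟨⟨congr_arg (· + 1) h.2.1.1, List.forall_mem_cons.mpr ⟨h.1, h.2.1.2⟩⟩, h.2.2⟩
  · rintro ⟨p, w⟩ _ ⟨q, v⟩ _ h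
    obtain ⟨rfl, rfl⟩ := List.cons_eq_cons.mp h
    rfl
  · rintro (_ | ⟨p, w⟩) h
    · simp [mem_words] at h
    · simp only [mem_filter, mem_words, List.length_cons, add_left_inj, List.forall_mem_cons] at h
      refine ⟨⟨p, w⟩, ?_, rfl⟩
      simp only [mem_sigma, mem_filter, mem_words]
      tauto

lemma wordCount_union [DecidableEq β] {A' : Finset β} (hA : Disjoint A A') (P Q : List β → Prop)
    (m : ℕ) :
    wordCount (A ∪ A') (fun w => P (w.filter (· ∈ A)) ∧ Q (w.filter (· ∈ A'))) m =
      ∑ ij ∈ HasAntidiagonal.antidiagonal m,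
        m.choose ij.1 * (wordCount A P ij.1 * wordCount A' Q ij.2) := by
  classical
  induction m generalizing P Q with
  | zero => by_cases hP : P [] <;> by_cases hQ : Q [] <;> simp [wordCount_zero, hP, hQ]
  | succ m ih =>
    have pascal := sum_antidiagonal_choose_succ_mul (R := ℕ)
      (fun i j => wordCount A P i * wordCount A' Q j) m
    simp only [Nat.cast_id] at pascal
    have first_in_left : ∀ p ∈ A, wordCount (A ∪ A') (fun w =>
        P ((p :: w).filter (· ∈ A)) ∧ Q ((p :: w).filter (· ∈ A'))) m =
        ∑ ij ∈ HasAntidiagonal.antidiagonal m,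
          m.choose ij.1 * (wordCount A (fun w => P (p :: w)) ij.1 * wordCount A' Q ij.2) := by
      intro p hp
      rw [← ih]
      simp [hp, disjoint_left.mp hA hp]
    have first_in_right : ∀ p ∈ A', wordCount (A ∪ A') (fun w =>
        P ((p :: w).filter (· ∈ A)) ∧ Q ((p :: w).filter (· ∈ A'))) m =
        ∑ ij ∈ HasAntidiagonal.antidiagonal m,
          m.choose ij.1 * (wordCount A P ij.1 * wordCount A' (fun w => Q (p :: w)) ij.2) := by
      intro p hp
      rw [← ih]
      simp [hp, disjoint_right.mp hA hp]
    rw [pascal, wordCount_succ, sum_union hA, add_comm, sum_congr rfl first_in_left,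
      sum_congr rfl first_in_right, sum_comm, sum_comm (s := A)]
    refine congr_arg₂ _ (sum_congr rfl fun ij _ => ?_) (sum_congr rfl fun ij hij => ?_)
    · rw [wordCount_succ, mul_sum, mul_sum]
    · rw [wordCount_succ, sum_mul, mul_sum, Nat.choose_symm_of_eq_add
        (HasAntidiagonal.mem_antidiagonal.mp hij).symm]

end Words

section Connectivity

variable {α : Type*} {w : List (α × α)} {B C D : Finset α} {x y z : α} {σ : Perm α}

/-- `C` is a union of connected components of the graph whose edges are the letters of `w`. -/
def IsSaturated (w : List (α × α)) (C : Finset α) : Prop := ∀ p ∈ w, p.1 ∈ C ↔ p.2 ∈ C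

/-- The letters of `w` connect the points of `B`. -/
def IsConnectedOn (w : List (α × α)) (B : Finset α) : Prop :=
  ∀ C ⊆ B, C.Nonempty → IsSaturated w C → C = B

lemma isSaturated_of_forall_mem_offDiag (hw : ∀ p ∈ w, p ∈ B.offDiag) :
    IsSaturated w B :=
  fun p hp => iff_of_true (mem_offDiag.mp (hw p hp)).1 (mem_offDiag.mp (hw p hp)).2.1

lemma isSaturated_cons : IsSaturated ((x, y) :: w) C ↔ (x ∈ C ↔ y ∈ C) ∧ IsSaturated w C :=
  List.forall_mem_cons

lemma IsConnectedOn.cons (h : IsConnectedOn w B) (p : α × α) : IsConnectedOn (p :: w) B :=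
  fun C hC hne hsat => h C hC hne (isSaturated_cons.mp hsat).2

lemma IsConnectedOn.cons_swap (h : IsConnectedOn ((x, y) :: w) B) :
    IsConnectedOn ((y, x) :: w) B :=
  fun C hC hne hsat => h C hC hne <|
    isSaturated_cons.mpr ((isSaturated_cons.mp hsat).imp_left Iff.symm)

lemma IsSaturated.union [DecidableEq α] (hC : IsSaturated w C) (hD : IsSaturated w D) :
    IsSaturated w (C ∪ D) :=
  fun p hp => by simp only [mem_union, hC p hp, hD p hp]

lemma IsSaturated.inter [DecidableEq α] (hC : IsSaturated w C) (hD : IsSaturated w D) :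
    IsSaturated w (C ∩ D) :=
  fun p hp => by simp only [mem_inter, hC p hp, hD p hp]

lemma IsSaturated.sdiff [DecidableEq α] (hC : IsSaturated w C) (hD : IsSaturated w D) :
    IsSaturated w (C \ D) :=
  fun p hp => by simp only [mem_sdiff, hC p hp, hD p hp]

lemma IsConnectedOn.subset_of_mem (h : IsConnectedOn w C) (hC : IsSaturated w C)
    (hD : IsSaturated w D) (hzC : z ∈ C) (hzD : z ∈ D) : C ⊆ D := by
  classical
  exact inter_eq_left.mp <|
    h (C ∩ D) inter_subset_left ⟨z, mem_inter.mpr ⟨hzC, hzD⟩⟩ (hC.inter hD)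

lemma IsConnectedOn.of_cons (h : IsConnectedOn ((x, y) :: w) B) (hB : IsSaturated w B)
    (hy : y ∈ B) (hC : IsSaturated w C) (hCB : C ⊆ B) (hyC : y ∉ C) :
    IsConnectedOn w C := by
  classical
  intro E hEC hE hsat
  refine hEC.antisymm fun z hz => ?_
  have hyE : y ∉ E := fun hyE => hyC (hEC hyE)
  by_cases hxE : x ∈ E
  · have union_eq : E ∪ B \ C = B := h _
      (union_subset (hEC.trans hCB) sdiff_subset) ⟨x, mem_union_left _ hxE⟩
      (isSaturated_cons.mpr ⟨by simp [hxE, hy, hyC], hsat.union (hB.sdiff hC)⟩)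
    have hz' : z ∈ E ∪ B \ C := union_eq.symm.subset (hCB hz)
    simpa [hz] using hz'
  · have E_eq : E = B := h E (hEC.trans hCB) hE (isSaturated_cons.mpr ⟨by simp [hxE, hyE], hsat⟩)
    exact absurd (E_eq ▸ hy) hyE

variable [DecidableEq α]

/-- The product of the transpositions encoded by the letters of `w`; the pairs `(x, y)` and `(y, x)`
encode the same transposition. -/
def swapProd (w : List (α × α)) : Perm α := (w.map fun p => swap p.1 p.2).prod

/-- The word `w` is a factorization of `σ` on `B` into transpositions that connect `B`. -/
def IsFactorization (B : Finset α) (σ : Perm α) (w : List (α × α)) : Prop :=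
  IsConnectedOn w B ∧ Set.EqOn (swapProd w) σ B

lemma isConnectedOn_cons_of_sdiff (hB : IsSaturated w B) (hy : y ∈ B) (hC : IsSaturated w C)
    (hxC : x ∈ C) (hyC : y ∉ C) (h : IsConnectedOn w C) (h' : IsConnectedOn w (B \ C)) :
    IsConnectedOn ((x, y) :: w) B := by
  rintro E hEB ⟨z, hz⟩ hsat
  obtain ⟨hxy, hE⟩ := isSaturated_cons.mp hsat
  have hy' : y ∈ B \ C := mem_sdiff.mpr ⟨hy, hyC⟩
  have left_subset : x ∈ E → C ⊆ E := h.subset_of_mem hC hE hxC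
  have right_subset : y ∈ E → B \ C ⊆ E := h'.subset_of_mem (hB.sdiff hC) hE hy'
  have hxE : x ∈ E := by
    by_cases hzC : z ∈ C
    · exact h.subset_of_mem hC hE hzC hz hxC
    · have hzD : z ∈ B \ C := mem_sdiff.mpr ⟨hEB hz, hzC⟩
      exact hxy.mpr (h'.subset_of_mem (hB.sdiff hC) hE hzD hz hy')
  refine hEB.antisymm ?_
  calc B ⊆ C ∪ B \ C := by simp
    _ ⊆ E := union_subset (left_subset hxE) (right_subset (hxy.mp hxE))

lemma isConnectedOn_cons_iff (hB : IsSaturated w B) (hx : x ∈ B) (hy : y ∈ B) :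
    IsConnectedOn ((x, y) :: w) B ↔ IsConnectedOn w B ∨
      ∃ C ⊆ B, (x ∈ C ∧ y ∉ C) ∧
        IsSaturated w C ∧ IsConnectedOn w C ∧ IsConnectedOn w (B \ C) := by
  refine ⟨fun h => or_iff_not_imp_left.mpr fun not_connected => ?_, ?_⟩
  · obtain ⟨C, hCB, hxC, hyC, hC⟩ : ∃ C ⊆ B, x ∈ C ∧ y ∉ C ∧ IsSaturated w C := by
      unfold IsConnectedOn at not_connected
      push Not at not_connected
      obtain ⟨C, hCB, hne, hC, C_ne⟩ := not_connected
      have separates : ¬ (x ∈ C ↔ y ∈ C) := fun hxy =>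
        C_ne (h C hCB hne (isSaturated_cons.mpr ⟨hxy, hC⟩))
      by_cases hxC : x ∈ C
      · exact ⟨C, hCB, hxC, by tauto, hC⟩
      · exact ⟨B \ C, sdiff_subset, by simp [hx, hxC], by rw [mem_sdiff]; tauto, hB.sdiff hC⟩
    exact ⟨C, hCB, ⟨hxC, hyC⟩, hC, h.of_cons hB hy hC hCB hyC,
      h.cons_swap.of_cons hB hx (hB.sdiff hC) sdiff_subset (by simp [hxC])⟩
  · rintro (h | ⟨C, -, ⟨hxC, hyC⟩, hC, h, h'⟩)
    · exact h.cons _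
    · exact isConnectedOn_cons_of_sdiff hB hy hC hxC hyC h h'

lemma swapProd_cons (x y : α) (w : List (α × α)) :
    swapProd ((x, y) :: w) = swap x y * swapProd w := by
  simp only [swapProd, List.map_cons, List.prod_cons]

lemma swap_apply_mem (h : x ∈ C ↔ y ∈ C) (hz : z ∈ C) : swap x y z ∈ C := by
  rcases eq_or_ne z x with rfl | hzx
  · simpa using h.mp hz
  rcases eq_or_ne z y with rfl | hzy
  · simpa using h.mpr hz
  rwa [swap_apply_of_ne_of_ne hzx hzy]

lemma IsSaturated.mapsTo_swapProd (hC : IsSaturated w C) : Set.MapsTo (swapProd w) C C := by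
  induction w with
  | nil => exact Set.mapsTo_id _
  | cons p w ih =>
    intro z hz
    rw [swapProd_cons]
    exact swap_apply_mem (isSaturated_cons.mp hC).1 (ih (isSaturated_cons.mp hC).2 hz)

lemma IsSaturated.swapProd_filter_eqOn (hC : IsSaturated w C) (hw : ∀ p ∈ w, p.1 ≠ p.2) :
    Set.EqOn (swapProd (w.filter (· ∈ C.offDiag))) (swapProd w) C := by
  induction w with
  | nil => exact Set.eqOn_refl _ _
  | cons p w ih =>
    obtain ⟨x, y⟩ := p
    obtain ⟨hxy, hC⟩ := isSaturated_cons.mp hC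
    obtain ⟨x_ne_y, hw⟩ := List.forall_mem_cons.mp hw
    intro z hz
    have image_mem := hC.mapsTo_swapProd hz
    by_cases hx : x ∈ C
    · rw [List.filter_cons_of_pos (by simpa using ⟨hx, hxy.mp hx, x_ne_y⟩), swapProd_cons,
        swapProd_cons, Perm.mul_apply, Perm.mul_apply, ih hC hw hz]
    · rw [List.filter_cons_of_neg (by simp [hx]), swapProd_cons, Perm.mul_apply, ih hC hw hz,
        swap_apply_of_ne_of_ne]
      · exact ne_of_mem_of_not_mem image_mem hx
      · exact ne_of_mem_of_not_mem image_mem (hxy.not.mp hx)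

lemma IsSaturated.isConnectedOn_filter_iff (hC : IsSaturated w C) (hw : ∀ p ∈ w, p.1 ≠ p.2) :
    IsConnectedOn (w.filter (· ∈ C.offDiag)) C ↔ IsConnectedOn w C := by
  refine forall₃_congr fun D hDC _ => imp_congr_left ⟨fun hD p hp => ?_, fun hD p hp => ?_⟩
  · by_cases hpC : p.1 ∈ C
    · have hp' : p ∈ C.offDiag := mem_offDiag.mpr ⟨hpC, (hC p hp).mp hpC, hw p hp⟩
      exact hD p (List.mem_filter.mpr ⟨hp, decide_eq_true hp'⟩)
    · exact iff_of_false (fun h => hpC (hDC h)) fun h => hpC ((hC p hp).mpr (hDC h))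
  · exact hD p (List.mem_of_mem_filter hp)

lemma IsSaturated.isFactorization_filter_iff (hC : IsSaturated w C) (hw : ∀ p ∈ w, p.1 ≠ p.2) :
    IsFactorization C σ (w.filter (· ∈ C.offDiag)) ↔ IsFactorization C σ w :=
  and_congr (hC.isConnectedOn_filter_iff hw)
    ⟨fun h => (hC.swapProd_filter_eqOn hw).symm.trans h, (hC.swapProd_filter_eqOn hw).trans⟩

lemma swapProd_cons_eqOn_iff :
    Set.EqOn (swapProd ((x, y) :: w)) σ B ↔ Set.EqOn (swapProd w) ⇑(swap x y * σ) B := by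
  refine forall₂_congr fun z _ => ?_
  rw [swapProd_cons, Perm.mul_apply, Perm.mul_apply, swap_apply_eq_iff]

lemma isFactorization_cons_iff (hB : IsSaturated w B) (hx : x ∈ B) (hy : y ∈ B) :
    IsFactorization B σ ((x, y) :: w) ↔ IsFactorization B (swap x y * σ) w ∨
      ∃ C ∈ B.powerset.filter (fun C => x ∈ C ∧ y ∉ C), IsSaturated w C ∧
        IsFactorization C (swap x y * σ) w ∧ IsFactorization (B \ C) (swap x y * σ) w := by
  have eqOn_iff : ∀ C ⊆ B, Set.EqOn (swapProd w) ⇑(swap x y * σ) B ↔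
      Set.EqOn (swapProd w) ⇑(swap x y * σ) C ∧ Set.EqOn (swapProd w) ⇑(swap x y * σ) ↑(B \ C) :=
    fun C hCB => by rw [← Set.eqOn_union, ← coe_union, union_sdiff_of_subset hCB]
  simp only [IsFactorization, isConnectedOn_cons_iff hB hx hy, swapProd_cons_eqOn_iff, or_and_right,
    mem_filter, mem_powerset]
  refine or_congr_right ⟨?_, ?_⟩
  · rintro ⟨⟨C, hCB, hxy, hC, h, h'⟩, heq⟩
    exact ⟨C, ⟨hCB, hxy⟩, hC, ⟨h, ((eqOn_iff C hCB).mp heq).1⟩, h', ((eqOn_iff C hCB).mp heq).2⟩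
  · rintro ⟨C, ⟨hCB, hxy⟩, hC, ⟨h, heq⟩, h', heq'⟩
    exact ⟨⟨C, hCB, hxy, hC, h, h'⟩, (eqOn_iff C hCB).mpr ⟨heq, heq'⟩⟩

end Connectivity

section FactorizationCount

variable {α : Type*} [DecidableEq α] {B C D : Finset α} {x y : α} {σ : Perm α} {m : ℕ}

/-- The number of transitive factorizations of `σ` on `B` into `m` transpositions, each of which is
written as an ordered pair of distinct points and hence counted twice. -/
noncomputable def factorizationCount (B : Finset α) (σ : Perm α) (m : ℕ) : ℕ :=
  wordCount B.offDiag (IsFactorization B σ) m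

/-- The number of factorizations of `σ` on `B` into `m + 1` transpositions that start with the
letter `(x, y)`. -/
noncomputable def factorizationCountCons (B : Finset α) (σ : Perm α) (x y : α) (m : ℕ) : ℕ :=
  wordCount B.offDiag (fun w => IsFactorization B σ ((x, y) :: w)) m

/-- The number of shuffles, `m` letters long, of a factorization of `σ` on `C` with one on `D`. -/
noncomputable def shuffleCount (C D : Finset α) (σ : Perm α) (m : ℕ) : ℕ :=
  ∑ ij ∈ HasAntidiagonal.antidiagonal m,
    m.choose ij.1 * (factorizationCount C σ ij.1 * factorizationCount D σ ij.2)

/-- The number of words that factor `σ` on `B` and have exactly two components, one containing `x`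
and the other `y`. -/
noncomputable def splitFactorizationCount (B : Finset α) (σ : Perm α) (x y : α) (m : ℕ) : ℕ :=
  ∑ C ∈ B.powerset with x ∈ C ∧ y ∉ C, shuffleCount C (B \ C) σ m

lemma forall_mem_offDiag_union_iff (hCD : Disjoint C D) {w : List (α × α)} :
    (∀ p ∈ w, p ∈ C.offDiag ∪ D.offDiag) ↔
      (∀ p ∈ w, p ∈ (C ∪ D).offDiag) ∧ IsSaturated w C := by
  rw [IsSaturated, ← forall₂_and]
  refine forall₂_congr fun p _ => ?_
  have first_notMem : p.1 ∈ C → p.1 ∉ D := fun h => disjoint_left.mp hCD h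
  have second_notMem : p.2 ∈ C → p.2 ∉ D := fun h => disjoint_left.mp hCD h
  simp only [mem_union, mem_offDiag]
  tauto

lemma wordCount_isSaturated_and (hCD : Disjoint C D) (σ : Perm α) (m : ℕ) :
    wordCount (C ∪ D).offDiag
        (fun w => IsSaturated w C ∧ IsFactorization C σ w ∧ IsFactorization D σ w) m =
      shuffleCount C D σ m := by
  have offDiag_disjoint : Disjoint C.offDiag D.offDiag :=
    disjoint_left.mpr fun p hC hD =>
      disjoint_left.mp hCD (mem_offDiag.mp hC).1 (mem_offDiag.mp hD).1
  simp only [shuffleCount, factorizationCount]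
  rw [← wordCount_union offDiag_disjoint]
  refine wordCount_congr fun w => ?_
  rw [forall_mem_offDiag_union_iff hCD, ← and_assoc]
  refine and_congr_right fun ⟨hw, hC⟩ => ?_
  have hne : ∀ p ∈ w, p.1 ≠ p.2 := fun p hp => (mem_offDiag.mp (hw p hp)).2.2
  have hD : IsSaturated w D := by
    simpa [union_sdiff_cancel_left hCD] using (isSaturated_of_forall_mem_offDiag hw).sdiff hC
  rw [hC.isFactorization_filter_iff hne, hD.isFactorization_filter_iff hne]

lemma factorizationCountCons_eq (hx : x ∈ B) (hy : y ∈ B) (σ : Perm α) (m : ℕ) :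
    factorizationCountCons B σ x y m =
      factorizationCount B (swap x y * σ) m +
        splitFactorizationCount B (swap x y * σ) x y m := by
  have split_count : splitFactorizationCount B (swap x y * σ) x y m =
      wordCount B.offDiag (fun w => ∃ C ∈ B.powerset.filter (fun C => x ∈ C ∧ y ∉ C),
        IsSaturated w C ∧ IsFactorization C (swap x y * σ) w ∧
          IsFactorization (B \ C) (swap x y * σ) w) m := by
    rw [wordCount_exists]
    · refine sum_congr rfl fun C hC => ?_
      rw [← wordCount_isSaturated_and disjoint_sdiff,
        union_sdiff_of_subset (mem_powerset.mp (mem_filter.mp hC).1)]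
    · intro w C hxC D hxD hC hD
      have hxC := (mem_filter.mp hxC).2.1
      have hxD := (mem_filter.mp hxD).2.1
      exact (hC.2.1.1.subset_of_mem hC.1 hD.1 hxC hxD).antisymm
        (hD.2.1.1.subset_of_mem hD.1 hC.1 hxD hxC)
  rw [split_count, factorizationCount, factorizationCountCons, ← wordCount_or]
  · refine wordCount_congr fun w => and_congr_right fun hw => ?_
    exact isFactorization_cons_iff (isSaturated_of_forall_mem_offDiag hw) hx hy
  · rintro w h ⟨C, hC, hsat, -⟩
    obtain ⟨hCB, hxC, hyC⟩ := mem_filter.mp hC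
    exact hyC (h.1 C (mem_powerset.mp hCB) ⟨x, hxC⟩ hsat ▸ hy)

lemma factorizationCount_succ (B : Finset α) (σ : Perm α) (m : ℕ) :
    factorizationCount B σ (m + 1) =
      ∑ p ∈ B.offDiag, factorizationCountCons B σ p.1 p.2 m :=
  wordCount_succ _ _ m

lemma mapsTo_of_factorizationCount_ne_zero (h : factorizationCount B σ m ≠ 0) :
    Set.MapsTo σ B B := by
  obtain ⟨w, -, hw, -, heq⟩ := wordCount_ne_zero_iff.mp h
  exact (isSaturated_of_forall_mem_offDiag hw).mapsTo_swapProd.congr heq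

lemma shuffleCount_eq_zero_of_not_mapsTo (h : ¬ Set.MapsTo σ C C) : shuffleCount C D σ m = 0 := by
  refine sum_eq_zero fun ij _ => ?_
  rw [not_ne_iff.mp fun h' => h (mapsTo_of_factorizationCount_ne_zero h'), zero_mul, mul_zero]

lemma exists_of_splitFactorizationCount_ne_zero (h : splitFactorizationCount B σ x y m ≠ 0) :
    ∃ C ⊆ B, x ∈ C ∧ y ∉ C ∧ ∃ i j, i + j = m ∧
      factorizationCount C σ i ≠ 0 ∧ factorizationCount (B \ C) σ j ≠ 0 := by
  obtain ⟨C, hC, h⟩ := exists_ne_zero_of_sum_ne_zero h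
  obtain ⟨⟨i, j⟩, hij, h⟩ := exists_ne_zero_of_sum_ne_zero h
  obtain ⟨hCB, hxC, hyC⟩ := mem_filter.mp hC
  exact ⟨C, mem_powerset.mp hCB, hxC, hyC, i, j, HasAntidiagonal.mem_antidiagonal.mp hij,
    left_ne_zero_of_mul (right_ne_zero_of_mul h), right_ne_zero_of_mul (right_ne_zero_of_mul h)⟩

lemma eq_singleton_of_factorizationCount_zero (hx : x ∈ B)
    (h : factorizationCount B σ 0 ≠ 0) : B = {x} := by
  obtain ⟨w, hw, -, hconn, -⟩ := wordCount_ne_zero_iff.mp h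
  obtain rfl := List.length_eq_zero_iff.mp hw
  have saturated : IsSaturated [] {x} := List.forall_mem_nil _
  exact (hconn {x} (singleton_subset_iff.mpr hx) (singleton_nonempty x) saturated).symm

lemma factorizationCount_singleton_zero (hx : σ x = x) : factorizationCount {x} σ 0 = 1 := by
  classical
  have empty_word : IsFactorization {x} σ [] := by
    refine ⟨fun C hC hne _ => (hne.subset_singleton_iff).mp hC, fun z hz => ?_⟩
    rw [mem_singleton.mp hz, hx]
    rfl
  rw [factorizationCount, wordCount_zero, if_pos empty_word]

end FactorizationCount

section Cycles

variable {α : Type*} {σ ρ : Perm α} {B C : Finset α} {x y z : α}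
  {i j m : ℕ}

lemma mem_of_sameCycle [Finite α] (hC : Set.MapsTo σ C C) (hx : x ∈ C) (h : σ.SameCycle x y) :
    y ∈ C := by
  obtain ⟨i, rfl⟩ := h.exists_nat_pow_eq
  exact hC.perm_pow i hx

variable [DecidableEq α]

lemma mapsTo_sdiff [Finite α] (hB : Set.MapsTo σ B B) (hC : Set.MapsTo σ C C) :
    Set.MapsTo σ ↑(B \ C) ↑(B \ C) := by
  intro z hz
  obtain ⟨hzB, hzC⟩ := mem_sdiff.mp hz
  refine mem_sdiff.mpr ⟨hB hzB, fun h => hzC ?_⟩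
  exact mem_of_sameCycle hC h (Perm.sameCycle_apply_left.mpr (Perm.SameCycle.refl σ z))

lemma mapsTo_swap_mul (hB : Set.MapsTo σ B B) (hxy : x ∈ B ↔ y ∈ B) :
    Set.MapsTo ⇑(swap x y * σ) B B :=
  fun _ hz => swap_apply_mem hxy (hB hz)

lemma swap_mul_pow_apply (h : ∀ i, 0 < i → i < j → (σ ^ i) x ≠ x ∧ (σ ^ i) x ≠ y) (hi : i < j) :
    ((swap x y * σ) ^ i) x = (σ ^ i) x := by
  induction i with
  | zero => rfl
  | succ i ih =>
    rw [pow_succ', Perm.mul_apply, ih (by lia), Perm.mul_apply, ← Perm.mul_apply σ, ← pow_succ']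
    exact swap_apply_of_ne_of_ne (h _ i.succ_pos hi).1 (h _ i.succ_pos hi).2

lemma swap_mul_pow_apply_self (hj : 0 < j)
    (h : ∀ i, 0 < i → i < j → (σ ^ i) x ≠ x ∧ (σ ^ i) x ≠ y) :
    ((swap x y * σ) ^ j) x = swap x y ((σ ^ j) x) := by
  obtain ⟨i, rfl⟩ := Nat.exists_eq_add_one_of_ne_zero hj.ne'
  rw [pow_succ', Perm.mul_apply, swap_mul_pow_apply h i.lt_succ_self, Perm.mul_apply,
    ← Perm.mul_apply σ, ← pow_succ']

variable [Fintype α]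

/-- The support of the cycle of `σ` through `x`, which is `{x}` when `x` is a fixed point. -/
def cycleSet (σ : Perm α) (x : α) : Finset α := {y | σ.SameCycle x y}

lemma mem_cycleSet : y ∈ cycleSet σ x ↔ σ.SameCycle x y := by
  simp only [cycleSet, mem_filter, mem_univ, true_and]

lemma self_mem_cycleSet (σ : Perm α) (x : α) : x ∈ cycleSet σ x :=
  mem_cycleSet.mpr (Perm.SameCycle.refl σ x)

lemma cycleSet_eq_iff : cycleSet σ x = cycleSet σ y ↔ σ.SameCycle x y := by
  refine ⟨fun h => mem_cycleSet.mp (h ▸ self_mem_cycleSet σ y), fun h => ?_⟩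
  ext z
  simp only [mem_cycleSet]
  exact ⟨h.symm.trans, h.trans⟩

lemma disjoint_cycleSet (h : ¬ σ.SameCycle x y) : Disjoint (cycleSet σ x) (cycleSet σ y) :=
  disjoint_left.mpr fun _ hx hy => h ((mem_cycleSet.mp hx).trans (mem_cycleSet.mp hy).symm)

lemma cycleSet_subset (hC : Set.MapsTo σ C C) (hx : x ∈ C) : cycleSet σ x ⊆ C :=
  fun _ hy => mem_of_sameCycle hC hx (mem_cycleSet.mp hy)

lemma mapsTo_cycleSet (σ : Perm α) (x : α) : Set.MapsTo σ (cycleSet σ x) (cycleSet σ x) :=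
  fun _ hy => mem_cycleSet.mpr (Perm.sameCycle_apply_right.mpr (mem_cycleSet.mp hy))

lemma isCycleOn_cycleSet (σ : Perm α) (x : α) : σ.IsCycleOn (cycleSet σ x) := by
  refine ⟨⟨mapsTo_cycleSet σ x, σ.injective.injOn, fun y hy => ⟨σ.symm y, ?_, by simp⟩⟩, ?_⟩
  · exact mem_cycleSet.mpr (Perm.sameCycle_symm_apply_right.mpr (mem_cycleSet.mp hy))
  · exact fun y hy z hz => (mem_cycleSet.mp hy).symm.trans (mem_cycleSet.mp hz)

lemma card_cycleSet_pos (σ : Perm α) (x : α) : 0 < #(cycleSet σ x) :=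
  card_pos.mpr ⟨x, self_mem_cycleSet σ x⟩

lemma pow_apply_eq_iff_of_lt (hi : i < #(cycleSet σ x)) (hj : j < #(cycleSet σ x)) :
    (σ ^ i) x = (σ ^ j) x ↔ i = j := by
  rw [(isCycleOn_cycleSet σ x).pow_apply_eq_pow_apply (self_mem_cycleSet σ x), Nat.ModEq,
    Nat.mod_eq_of_lt hi, Nat.mod_eq_of_lt hj]

lemma pow_apply_ne (hi : 0 < i) (hi' : i < #(cycleSet σ x)) : (σ ^ i) x ≠ x := fun h =>
  hi.ne' ((pow_apply_eq_iff_of_lt hi' (card_cycleSet_pos σ x)).mp (by simpa using h))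

lemma exists_pow_eq_of_sameCycle (hxy : x ≠ y) (h : σ.SameCycle x y) :
    ∃ j, 0 < j ∧ j < #(cycleSet σ x) ∧ (σ ^ j) x = y := by
  obtain ⟨j, hj, rfl⟩ := (isCycleOn_cycleSet σ x).exists_pow_eq (self_mem_cycleSet σ x)
    (mem_cycleSet.mpr h)
  refine ⟨j, Nat.pos_of_ne_zero ?_, hj, rfl⟩
  rintro rfl
  exact hxy rfl

lemma cycleSet_congr (h : Set.EqOn σ ρ (cycleSet ρ x)) : cycleSet σ x = cycleSet ρ x := by
  have pow_eq : ∀ i : ℕ, (σ ^ i) x = (ρ ^ i) x := fun i => by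
    induction i with
    | zero => rfl
    | succ i ih =>
      rw [pow_succ', pow_succ', Perm.mul_apply, Perm.mul_apply, ih]
      exact h (mem_cycleSet.mpr ((Perm.SameCycle.refl ρ x).pow_right))
  ext y
  simp only [mem_cycleSet]
  constructor <;> intro h' <;> obtain ⟨i, rfl⟩ := h'.exists_nat_pow_eq
  · exact pow_eq i ▸ (Perm.SameCycle.refl ρ x).pow_right
  · exact pow_eq i ▸ (Perm.SameCycle.refl σ x).pow_right

lemma pow_apply_ne_of_not_sameCycle (h : ¬ ρ.SameCycle x y) (i : ℕ) (hi : 0 < i)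
    (hi' : i < #(cycleSet ρ x)) : (ρ ^ i) x ≠ x ∧ (ρ ^ i) x ≠ y :=
  ⟨pow_apply_ne hi hi', fun hy => h (hy ▸ (Perm.SameCycle.refl ρ x).pow_right)⟩

lemma sameCycle_swap_mul (h : ¬ ρ.SameCycle x y) : (swap x y * ρ).SameCycle x y := by
  have reaches := swap_mul_pow_apply_self (card_cycleSet_pos ρ x) (pow_apply_ne_of_not_sameCycle h)
  rw [(isCycleOn_cycleSet ρ x).pow_card_apply (self_mem_cycleSet ρ x), swap_apply_left] at reaches
  exact ⟨#(cycleSet ρ x), by simpa using reaches⟩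

lemma cycleSet_subset_cycleSet_swap_mul (h : ¬ ρ.SameCycle x y) :
    cycleSet ρ x ⊆ cycleSet (swap x y * ρ) x := by
  intro z hz
  obtain ⟨i, hi, rfl⟩ := (isCycleOn_cycleSet ρ x).exists_pow_eq (self_mem_cycleSet ρ x) hz
  rw [← swap_mul_pow_apply (pow_apply_ne_of_not_sameCycle h) hi]
  exact mem_cycleSet.mpr (Perm.SameCycle.refl _ x).pow_right

lemma cycleSet_swap_mul (h : ¬ ρ.SameCycle x y) :
    cycleSet (swap x y * ρ) x = cycleSet ρ x ∪ cycleSet ρ y := by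
  refine (cycleSet_subset (mapsTo_swap_mul ?_ ?_) ?_).antisymm (union_subset ?_ ?_)
  · rw [coe_union]
    exact (mapsTo_cycleSet ρ x).union_union (mapsTo_cycleSet ρ y)
  · simp [self_mem_cycleSet]
  · simp [self_mem_cycleSet]
  · exact cycleSet_subset_cycleSet_swap_mul h
  · rw [cycleSet_eq_iff.mpr (sameCycle_swap_mul h), swap_comm]
    exact cycleSet_subset_cycleSet_swap_mul fun h' => h h'.symm

lemma cycleSet_swap_mul_of_not_sameCycle (hx : ¬ ρ.SameCycle x z) (hy : ¬ ρ.SameCycle y z) :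
    cycleSet (swap x y * ρ) z = cycleSet ρ z := by
  refine cycleSet_congr fun u hu => ?_
  have hu' : ρ.SameCycle (ρ u) z := (mem_cycleSet.mp (mapsTo_cycleSet ρ z hu)).symm
  rw [Perm.mul_apply, swap_apply_of_ne_of_ne]
  · rintro rfl
    exact hx hu'
  · rintro rfl
    exact hy hu'

lemma swap_pow_apply_mul_pow_apply (hj : j < #(cycleSet σ x)) (hi : i < j) :
    ((swap x ((σ ^ j) x) * σ) ^ i) x = (σ ^ i) x :=
  swap_mul_pow_apply (fun _ hk hkj => ⟨pow_apply_ne hk (hkj.trans hj),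
    fun h => hkj.ne ((pow_apply_eq_iff_of_lt (hkj.trans hj) hj).mp h)⟩) hi

lemma swap_pow_apply_mul_pow_apply_self (hj : 0 < j) (hj' : j < #(cycleSet σ x)) :
    ((swap x ((σ ^ j) x) * σ) ^ j) x = x := by
  rw [swap_mul_pow_apply_self hj, swap_apply_right]
  exact fun _ hk hkj => ⟨pow_apply_ne hk (hkj.trans hj'),
    fun h => hkj.ne ((pow_apply_eq_iff_of_lt (hkj.trans hj') hj').mp h)⟩

lemma card_cycleSet_swap_pow_apply_mul (hj : 0 < j) (hj' : j < #(cycleSet σ x)) :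
    #(cycleSet (swap x ((σ ^ j) x) * σ) x) = j := by
  set ρ := swap x ((σ ^ j) x) * σ
  have hx := self_mem_cycleSet ρ x
  have card_dvd : #(cycleSet ρ x) ∣ j :=
    ((isCycleOn_cycleSet ρ x).pow_apply_eq hx).mp (swap_pow_apply_mul_pow_apply_self hj hj')
  by_contra card_ne
  have card_lt : #(cycleSet ρ x) < j := (Nat.le_of_dvd hj card_dvd).lt_of_ne card_ne
  refine pow_apply_ne (card_cycleSet_pos ρ x) (card_lt.trans hj') ?_
  rw [← swap_pow_apply_mul_pow_apply hj' card_lt, (isCycleOn_cycleSet ρ x).pow_card_apply hx]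

lemma not_sameCycle_swap_pow_apply_mul (hj : 0 < j) (hj' : j < #(cycleSet σ x)) :
    ¬ (swap x ((σ ^ j) x) * σ).SameCycle x ((σ ^ j) x) := by
  intro h
  obtain ⟨i, hi, hij⟩ := (isCycleOn_cycleSet _ x).exists_pow_eq (self_mem_cycleSet _ x)
    (mem_cycleSet.mpr h)
  rw [card_cycleSet_swap_pow_apply_mul hj hj'] at hi
  rw [swap_pow_apply_mul_pow_apply hj' hi] at hij
  exact hi.ne ((pow_apply_eq_iff_of_lt (hi.trans hj') hj').mp hij)

lemma not_sameCycle_swap_mul (hxy : x ≠ y) (h : σ.SameCycle x y) :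
    ¬ (swap x y * σ).SameCycle x y := by
  obtain ⟨j, hj, hj', rfl⟩ := exists_pow_eq_of_sameCycle hxy h
  exact not_sameCycle_swap_pow_apply_mul hj hj'

lemma card_cycleSet_add_card_cycleSet (hxy : x ≠ y) (h : σ.SameCycle x y) :
    #(cycleSet (swap x y * σ) x) + #(cycleSet (swap x y * σ) y) = #(cycleSet σ x) := by
  have hcut := not_sameCycle_swap_mul hxy h
  rw [← card_union_of_disjoint (disjoint_cycleSet hcut), ← cycleSet_swap_mul hcut,
    swap_mul_self_mul]

end Cycles

section CyclesOn

variable {α : Type*} [DecidableEq α] [Fintype α] {σ ρ : Perm α} {B C c : Finset α} {x y z : α}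
  {T : Finset (Finset α)} {m : ℕ}

/-- The supports of the cycles of `σ` that meet `B`, fixed points included. -/
def cyclesOn (σ : Perm α) (B : Finset α) : Finset (Finset α) := B.image (cycleSet σ)

lemma mem_cyclesOn : c ∈ cyclesOn σ B ↔ ∃ x ∈ B, cycleSet σ x = c := mem_image

lemma cycleSet_mem_cyclesOn (hx : x ∈ B) : cycleSet σ x ∈ cyclesOn σ B := mem_image_of_mem _ hx

lemma cyclesOn_nonempty (hB : B.Nonempty) : (cyclesOn σ B).Nonempty := hB.image _

lemma cycleSet_mem_cyclesOn_iff (hB : Set.MapsTo σ B B) :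
    cycleSet σ x ∈ cyclesOn σ B ↔ x ∈ B := by
  refine ⟨fun h => ?_, cycleSet_mem_cyclesOn⟩
  obtain ⟨z, hz, hzx⟩ := mem_cyclesOn.mp h
  exact mem_of_sameCycle hB hz (cycleSet_eq_iff.mp hzx)

lemma cyclesOn_mono (h : C ⊆ B) : cyclesOn σ C ⊆ cyclesOn σ B := image_subset_image h

lemma cyclesOn_sdiff (hC : Set.MapsTo σ C C) :
    cyclesOn σ (B \ C) = cyclesOn σ B \ cyclesOn σ C := by
  ext c
  simp only [mem_sdiff, mem_cyclesOn (B := B), mem_cyclesOn (B := B \ C)]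
  constructor
  · rintro ⟨x, ⟨hx, hx'⟩, rfl⟩
    exact ⟨⟨x, hx, rfl⟩, (cycleSet_mem_cyclesOn_iff hC).not.mpr hx'⟩
  · rintro ⟨⟨x, hx, rfl⟩, hx'⟩
    exact ⟨x, ⟨hx, (cycleSet_mem_cyclesOn_iff hC).not.mp hx'⟩, rfl⟩

lemma card_pos_of_mem_cyclesOn (hc : c ∈ cyclesOn σ B) : 0 < #c := by
  obtain ⟨x, -, rfl⟩ := mem_cyclesOn.mp hc
  exact card_cycleSet_pos σ x

lemma sum_cycleSet (hB : Set.MapsTo σ B B) (f : Finset α → ℚ) :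
    ∑ x ∈ B, f (cycleSet σ x) = ∑ c ∈ cyclesOn σ B, #c * f c := by
  rw [sum_comp f (cycleSet σ)]
  refine sum_congr rfl fun c hc => ?_
  obtain ⟨x, hx, rfl⟩ := mem_cyclesOn.mp hc
  have fiber_eq : {z ∈ B | cycleSet σ z = cycleSet σ x} = cycleSet σ x := by
    ext z
    rw [mem_filter, cycleSet_eq_iff, mem_cycleSet, Perm.sameCycle_comm]
    exact and_iff_right_of_imp (mem_of_sameCycle hB hx)
  rw [fiber_eq, nsmul_eq_mul]

lemma sum_card_cyclesOn (hB : Set.MapsTo σ B B) : ∑ c ∈ cyclesOn σ B, (#c : ℚ) = #B := by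
  simpa using (sum_cycleSet hB fun _ => 1).symm

/-- The cycles of `ρ` that meet `B`, except for the cycles through `x` and `y`. -/
def otherCycles (ρ : Perm α) (B : Finset α) (x y : α) : Finset (Finset α) :=
  ((cyclesOn ρ B).erase (cycleSet ρ x)).erase (cycleSet ρ y)

lemma mem_otherCycles :
    c ∈ otherCycles ρ B x y ↔ c ≠ cycleSet ρ y ∧ c ≠ cycleSet ρ x ∧ c ∈ cyclesOn ρ B := by
  simp only [otherCycles, mem_erase]

lemma cyclesOn_eq_insert_insert (hx : x ∈ B) (hy : y ∈ B) (h : ¬ ρ.SameCycle x y) :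
    cyclesOn ρ B = insert (cycleSet ρ x) (insert (cycleSet ρ y) (otherCycles ρ B x y)) := by
  have hyx : cycleSet ρ y ≠ cycleSet ρ x := fun h' => h (cycleSet_eq_iff.mp h').symm
  rw [otherCycles, insert_erase (mem_erase.mpr ⟨hyx, cycleSet_mem_cyclesOn hy⟩),
    insert_erase (cycleSet_mem_cyclesOn hx)]

lemma cyclesOn_swap_mul (hx : x ∈ B) (h : ¬ ρ.SameCycle x y) :
    cyclesOn (swap x y * ρ) B =
      insert (cycleSet (swap x y * ρ) x) (otherCycles ρ B x y) := by
  have joined : ∀ {z}, (swap x y * ρ).SameCycle x z ↔ ρ.SameCycle x z ∨ ρ.SameCycle y z := by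
    simp only [← mem_cycleSet, cycleSet_swap_mul h, mem_union, implies_true]
  ext c
  simp only [mem_insert, mem_otherCycles, mem_cyclesOn]
  constructor
  · rintro ⟨z, hz, rfl⟩
    by_cases hxz : (swap x y * ρ).SameCycle x z
    · exact Or.inl (cycleSet_eq_iff.mpr hxz.symm)
    · obtain ⟨hx', hy'⟩ := not_or.mp (joined.not.mp hxz)
      rw [cycleSet_swap_mul_of_not_sameCycle hx' hy', Ne, Ne, cycleSet_eq_iff, cycleSet_eq_iff]
      exact Or.inr ⟨mt Perm.SameCycle.symm hy', mt Perm.SameCycle.symm hx', z, hz, rfl⟩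
  · rintro (rfl | ⟨hy', hx', z, hz, rfl⟩)
    · exact ⟨x, hx, rfl⟩
    · rw [Ne, cycleSet_eq_iff, Perm.sameCycle_comm] at hx' hy'
      exact ⟨z, hz, cycleSet_swap_mul_of_not_sameCycle hx' hy'⟩

lemma cycleSet_swap_mul_notMem_otherCycles :
    cycleSet (swap x y * ρ) x ∉ otherCycles ρ B x y := by
  intro hmem
  obtain ⟨-, hx, hmem⟩ := mem_otherCycles.mp hmem
  obtain ⟨z, -, hz⟩ := mem_cyclesOn.mp hmem
  have hxz : x ∈ cycleSet ρ z := hz ▸ self_mem_cycleSet _ x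
  exact hx (hz ▸ cycleSet_eq_iff.mpr (mem_cycleSet.mp hxz))

lemma card_cyclesOn_swap_mul (hx : x ∈ B) (hy : y ∈ B) (h : ¬ ρ.SameCycle x y) :
    #(cyclesOn (swap x y * ρ) B) + 1 = #(cyclesOn ρ B) := by
  rw [cyclesOn_swap_mul hx h, card_insert_of_notMem cycleSet_swap_mul_notMem_otherCycles,
    cyclesOn_eq_insert_insert hx hy h, card_insert_of_notMem, card_insert_of_notMem]
  · simp [mem_otherCycles]
  · simp [mem_otherCycles, cycleSet_eq_iff, h]

lemma card_cyclesOn_swap_mul_of_sameCycle (hx : x ∈ B) (hy : y ∈ B) (hxy : x ≠ y)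
    (h : σ.SameCycle x y) : #(cyclesOn (swap x y * σ) B) = #(cyclesOn σ B) + 1 := by
  have := card_cyclesOn_swap_mul hx hy (not_sameCycle_swap_mul hxy h)
  rw [← this, swap_mul_self_mul]

lemma card_cyclesOn_le_card_cyclesOn_swap_mul_add_one (hx : x ∈ B) (hy : y ∈ B) (hxy : x ≠ y) :
    #(cyclesOn σ B) ≤ #(cyclesOn (swap x y * σ) B) + 1 := by
  by_cases h : σ.SameCycle x y
  · rw [card_cyclesOn_swap_mul_of_sameCycle hx hy hxy h]
    lia
  · exact (card_cyclesOn_swap_mul hx hy h).ge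

lemma card_cyclesOn_add_sdiff (hC : Set.MapsTo σ C C) (hCB : C ⊆ B) :
    #(cyclesOn σ C) + #(cyclesOn σ (B \ C)) = #(cyclesOn σ B) := by
  rw [cyclesOn_sdiff hC, add_comm, card_sdiff_add_card_eq_card (cyclesOn_mono hCB)]

lemma card_add_card_cyclesOn_le (hB : B.Nonempty) (h : factorizationCount B σ m ≠ 0) :
    #B + #(cyclesOn σ B) ≤ m + 2 := by
  induction m using Nat.strong_induction_on generalizing B σ with
  | _ m ih =>
  rcases m with _ | m
  · obtain ⟨x, hx⟩ := hB
    rw [eq_singleton_of_factorizationCount_zero hx h]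
    simp [cyclesOn]
  · rw [factorizationCount_succ] at h
    obtain ⟨⟨x, y⟩, hxy, h⟩ := exists_ne_zero_of_sum_ne_zero h
    obtain ⟨hx, hy, x_ne_y⟩ := mem_offDiag.mp hxy
    rw [factorizationCountCons_eq hx hy] at h
    rcases not_and_or.mp (mt Nat.add_eq_zero_iff.mpr h) with h | h
    · have := ih m m.lt_succ_self hB h
      have := card_cyclesOn_le_card_cyclesOn_swap_mul_add_one (σ := σ) hx hy x_ne_y
      lia
    · obtain ⟨C, hCB, hxC, hyC, i, j, rfl, hi, hj⟩ := exists_of_splitFactorizationCount_ne_zero h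
      have hC := mapsTo_of_factorizationCount_ne_zero hi
      have left_le := ih i (by lia) ⟨x, hxC⟩ hi
      have right_le := ih j (by lia) ⟨y, mem_sdiff.mpr ⟨hy, hyC⟩⟩ hj
      have joined := card_cyclesOn_swap_mul hx hy fun hsame => hyC (mem_of_sameCycle hC hxC hsame)
      rw [swap_mul_self_mul] at joined
      have := card_cyclesOn_add_sdiff hC hCB
      have := card_sdiff_add_card_eq_card hCB
      lia

end CyclesOn

section HurwitzFormula

variable {α : Type*} [DecidableEq α] {σ ρ : Perm α} {B C D c : Finset α} {x y z : α}
  {S T : Finset (Finset α)} {m : ℕ}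

/-- The Hurwitz number of a permutation with set of cycles `T`, up to the factor `m!` for the order
of the `m` transpositions. -/
def hurwitzValue (T : Finset (Finset α)) : ℚ :=
  (∑ c ∈ T, (#c : ℚ)) ^ ((#T : ℤ) - 3) * ∏ c ∈ T, hurwitzWeight #c

lemma hurwitzValue_insert (hc : c ∉ T) :
    hurwitzValue (insert c T) = hurwitzWeight #c * (∏ d ∈ T, hurwitzWeight #d) *
      hurwitzKernel (fun d : Finset α => (#d : ℚ)) #c T := by
  have exponent : ((#T + 1 : ℕ) : ℤ) - 3 = #T - 2 := by push_cast; ring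
  rw [hurwitzValue, sum_insert hc, prod_insert hc, card_insert_of_notMem hc, hurwitzKernel,
    exponent]
  ring

lemma sum_hurwitzValue_insert_mul (R : Finset (Finset α)) {d : Finset α} (hc : c ∉ R)
    (hd : d ∉ R) :
    ∑ S ∈ R.powerset, hurwitzValue (insert c S) * hurwitzValue (insert d (R \ S)) =
      (∏ e ∈ R, hurwitzWeight #e) * (hurwitzWeight #c * hurwitzWeight #d *
        subsetConv (hurwitzKernel (fun e : Finset α => (#e : ℚ)) #c)
          (hurwitzKernel (fun e : Finset α => (#e : ℚ)) #d) R) := by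
  rw [subsetConv, mul_sum, mul_sum]
  refine sum_congr rfl fun S hS => ?_
  have hS := mem_powerset.mp hS
  rw [hurwitzValue_insert (fun h => hc (hS h)),
    hurwitzValue_insert (fun h => hd (sdiff_subset h)), ← prod_sdiff hS]
  ring

lemma splitFactorizationCount_of_sameCycle [Finite α] (h : ρ.SameCycle x y) (m : ℕ) :
    splitFactorizationCount B ρ x y m = 0 := by
  by_contra hne
  obtain ⟨C, -, hxC, hyC, i, j, -, hC, -⟩ := exists_of_splitFactorizationCount_ne_zero hne
  exact hyC (mem_of_sameCycle (mapsTo_of_factorizationCount_ne_zero hC) hxC h)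

variable [Fintype α]

lemma mem_biUnion_cyclesOn (hT : T ⊆ cyclesOn σ B) : z ∈ T.biUnion id ↔ cycleSet σ z ∈ T := by
  refine ⟨fun h => ?_, fun h => mem_biUnion.mpr ⟨_, h, self_mem_cycleSet σ z⟩⟩
  obtain ⟨c, hc, hz⟩ := mem_biUnion.mp h
  obtain ⟨x, -, rfl⟩ := mem_cyclesOn.mp (hT hc)
  rwa [cycleSet_eq_iff.mpr (mem_cycleSet.mp hz)] at hc

lemma mapsTo_biUnion_cyclesOn (hT : T ⊆ cyclesOn σ B) :
    Set.MapsTo σ ↑(T.biUnion id) ↑(T.biUnion id) := by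
  intro z hz
  rw [mem_coe, mem_biUnion_cyclesOn hT] at hz ⊢
  rwa [cycleSet_eq_iff.mpr (Perm.sameCycle_apply_left.mpr (Perm.SameCycle.refl σ z))]

lemma biUnion_subset_of_subset_cyclesOn (hB : Set.MapsTo σ B B) (hT : T ⊆ cyclesOn σ B) :
    T.biUnion id ⊆ B :=
  fun _ hz => (cycleSet_mem_cyclesOn_iff hB).mp (hT ((mem_biUnion_cyclesOn hT).mp hz))

lemma cyclesOn_biUnion (hT : T ⊆ cyclesOn σ B) : cyclesOn σ (T.biUnion id) = T := by
  ext c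
  rw [mem_cyclesOn]
  constructor
  · rintro ⟨x, hx, rfl⟩
    exact (mem_biUnion_cyclesOn hT).mp hx
  · intro hc
    obtain ⟨x, -, rfl⟩ := mem_cyclesOn.mp (hT hc)
    exact ⟨x, (mem_biUnion_cyclesOn hT).mpr hc, rfl⟩

lemma biUnion_cyclesOn (hC : Set.MapsTo σ C C) : (cyclesOn σ C).biUnion id = C := by
  ext z
  rw [mem_biUnion_cyclesOn Subset.rfl, cycleSet_mem_cyclesOn_iff hC]

lemma insert_cycleSet_subset_cyclesOn (hx : x ∈ B) (hS : S ⊆ otherCycles ρ B x y) :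
    insert (cycleSet ρ x) S ⊆ cyclesOn ρ B :=
  insert_subset (cycleSet_mem_cyclesOn hx)
    (hS.trans fun _ hc => (mem_otherCycles.mp hc).2.2)

lemma cyclesOn_erase_subset_otherCycles (hCB : C ⊆ B) (hC : Set.MapsTo ρ C C) (hyC : y ∉ C) :
    (cyclesOn ρ C).erase (cycleSet ρ x) ⊆ otherCycles ρ B x y := by
  intro c hc
  obtain ⟨hcx, hc⟩ := mem_erase.mp hc
  refine mem_otherCycles.mpr ⟨?_, hcx, cyclesOn_mono hCB hc⟩
  rintro rfl
  exact hyC ((cycleSet_mem_cyclesOn_iff hC).mp hc)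

lemma cyclesOn_sdiff_biUnion (hx : x ∈ B) (hy : y ∈ B) (h : ¬ ρ.SameCycle x y)
    (hS : S ⊆ otherCycles ρ B x y) :
    cyclesOn ρ (B \ (insert (cycleSet ρ x) S).biUnion id) =
      insert (cycleSet ρ y) (otherCycles ρ B x y \ S) := by
  have hT := insert_cycleSet_subset_cyclesOn hx hS
  have hyx : cycleSet ρ y ≠ cycleSet ρ x := fun h' => h (cycleSet_eq_iff.mp h').symm
  have hyS : cycleSet ρ y ∉ S := fun h' => (mem_otherCycles.mp (hS h')).1 rfl
  have hxR : cycleSet ρ x ∉ otherCycles ρ B x y := fun h' => (mem_otherCycles.mp h').2.1 rfl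
  rw [cyclesOn_sdiff (mapsTo_biUnion_cyclesOn hT), cyclesOn_biUnion hT,
    cyclesOn_eq_insert_insert hx hy h, insert_sdiff_insert,
    insert_sdiff_of_notMem _ (by simp [hyx, hyS]), sdiff_insert_of_notMem hxR]

lemma sum_filter_eq_sum_otherCycles (hB : Set.MapsTo ρ B B) (hx : x ∈ B) (h : ¬ ρ.SameCycle x y)
    (F : Finset α → ℚ) (hF : ∀ C : Finset α, ¬ Set.MapsTo ρ C C → F C = 0) :
    ∑ C ∈ B.powerset with x ∈ C ∧ y ∉ C, F C =
      ∑ S ∈ (otherCycles ρ B x y).powerset, F ((insert (cycleSet ρ x) S).biUnion id) := by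
  have subset_cyclesOn : ∀ S ∈ (otherCycles ρ B x y).powerset,
      insert (cycleSet ρ x) S ⊆ cyclesOn ρ B :=
    fun S hS => insert_cycleSet_subset_cyclesOn hx (mem_powerset.mp hS)
  have hxR : ∀ S ∈ (otherCycles ρ B x y).powerset, cycleSet ρ x ∉ S :=
    fun S hS h' => (mem_otherCycles.mp (mem_powerset.mp hS h')).2.1 rfl
  symm
  refine sum_of_injOn (fun S => (insert (cycleSet ρ x) S).biUnion id) ?_ ?_ ?_ fun _ _ => rfl
  · intro S hS S' hS' heq
    have heq' := congr_arg (cyclesOn ρ) heq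
    rw [cyclesOn_biUnion (subset_cyclesOn S hS), cyclesOn_biUnion (subset_cyclesOn S' hS')] at heq'
    rw [← erase_insert (hxR S hS), heq', erase_insert (hxR S' hS')]
  · intro S hS
    have hT := subset_cyclesOn S hS
    have hyx : cycleSet ρ y ≠ cycleSet ρ x := fun h' => h (cycleSet_eq_iff.mp h').symm
    have hyS : cycleSet ρ y ∉ S := fun h' => (mem_otherCycles.mp (mem_powerset.mp hS h')).1 rfl
    rw [mem_coe, mem_filter, mem_powerset, mem_biUnion_cyclesOn hT, mem_biUnion_cyclesOn hT]
    exact ⟨biUnion_subset_of_subset_cyclesOn hB hT, mem_insert_self _ _, by simp [hyx, hyS]⟩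
  · intro C hC not_image
    obtain ⟨hCB, hxC, hyC⟩ := mem_filter.mp hC
    refine hF C fun hmaps => not_image ⟨(cyclesOn ρ C).erase (cycleSet ρ x), ?_, ?_⟩
    · exact mem_powerset.mpr
        (cyclesOn_erase_subset_otherCycles (mem_powerset.mp hCB) hmaps hyC)
    · simp only [insert_erase (cycleSet_mem_cyclesOn hxC), biUnion_cyclesOn hmaps]

lemma sum_cut_points (σ : Perm α) (x : α) (H : ℕ → ℕ → ℚ) (left_zero : ∀ b, H 0 b = 0)
    (right_zero : ∀ a, H a 0 = 0) :
    ∑ y ∈ (cycleSet σ x).erase x,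
        H #(cycleSet (swap x y * σ) x) #(cycleSet (swap x y * σ) y) =
      ∑ p ∈ HasAntidiagonal.antidiagonal #(cycleSet σ x), H p.1 p.2 := by
  have mem_erase_iff : ∀ {y}, y ∈ (cycleSet σ x).erase x ↔ x ≠ y ∧ σ.SameCycle x y := by
    intro y
    rw [mem_erase, mem_cycleSet, ne_comm]
  refine sum_of_injOn
    (fun y => (#(cycleSet (swap x y * σ) x), #(cycleSet (swap x y * σ) y))) ?_ ?_ ?_ fun _ _ => rfl
  · intro y hy y' hy' heq
    obtain ⟨hxy, hsame⟩ := mem_erase_iff.mp hy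
    obtain ⟨hxy', hsame'⟩ := mem_erase_iff.mp hy'
    obtain ⟨j, hj, hj', rfl⟩ := exists_pow_eq_of_sameCycle hxy hsame
    obtain ⟨k, hk, hk', rfl⟩ := exists_pow_eq_of_sameCycle hxy' hsame'
    have card_eq := congr_arg Prod.fst heq
    simp only [card_cycleSet_swap_pow_apply_mul, hj, hj', hk, hk'] at card_eq
    rw [card_eq]
  · intro y hy
    obtain ⟨hxy, hsame⟩ := mem_erase_iff.mp hy
    exact HasAntidiagonal.mem_antidiagonal.mpr (card_cycleSet_add_card_cycleSet hxy hsame)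
  · rintro ⟨a, b⟩ hab not_image
    rw [HasAntidiagonal.mem_antidiagonal] at hab
    rcases Nat.eq_zero_or_pos a with rfl | ha
    · exact left_zero b
    rcases Nat.eq_zero_or_pos b with rfl | hb
    · exact right_zero a
    have ha' : a < #(cycleSet σ x) := by lia
    have hsame : σ.SameCycle x ((σ ^ a) x) := (Perm.SameCycle.refl σ x).pow_right
    have hne := (pow_apply_ne ha ha').symm
    have card_left := card_cycleSet_swap_pow_apply_mul ha ha'
    have card_add := card_cycleSet_add_card_cycleSet hne hsame
    refine absurd ⟨(σ ^ a) x, mem_erase_iff.mpr ⟨hne, hsame⟩, Prod.ext card_left ?_⟩ not_image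
    lia

/-- Hurwitz's formula for the minimal transitive factorizations into `m` transpositions on subsets
of `α`; the factor `2 ^ m` accounts for the two orders of every pair. -/
def HurwitzFormula (α : Type*) [DecidableEq α] [Fintype α] (m : ℕ) : Prop :=
  ∀ (B : Finset α) (σ : Perm α), B.Nonempty → Set.MapsTo σ B B → m + 2 = #B + #(cyclesOn σ B) →
    (factorizationCount B σ m : ℚ) = 2 ^ m * m.factorial * hurwitzValue (cyclesOn σ B)

lemma shuffleCount_eq (hC : C.Nonempty) (hD : D.Nonempty) (hσC : Set.MapsTo σ C C)
    (hσD : Set.MapsTo σ D D) (hm : m + 4 = #C + #(cyclesOn σ C) + (#D + #(cyclesOn σ D)))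
    (formula : ∀ k ≤ m, HurwitzFormula α k) :
    (shuffleCount C D σ m : ℚ) =
      2 ^ m * m.factorial * (hurwitzValue (cyclesOn σ C) * hurwitzValue (cyclesOn σ D)) := by
  have := hC.card_pos
  have := hD.card_pos
  have := (cyclesOn_nonempty (σ := σ) hC).card_pos
  have := (cyclesOn_nonempty (σ := σ) hD).card_pos
  obtain ⟨i, hi⟩ : ∃ i, i + 2 = #C + #(cyclesOn σ C) := ⟨_, Nat.sub_add_cancel (by lia)⟩
  obtain ⟨j, hj⟩ : ∃ j, j + 2 = #D + #(cyclesOn σ D) := ⟨_, Nat.sub_add_cancel (by lia)⟩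
  obtain rfl : i + j = m := by lia
  have only_minimal : ∀ ij ∈ HasAntidiagonal.antidiagonal (i + j), ij ≠ (i, j) →
      (i + j).choose ij.1 * (factorizationCount C σ ij.1 * factorizationCount D σ ij.2) = 0 := by
    rintro ⟨k, l⟩ hkl hne
    rw [HasAntidiagonal.mem_antidiagonal] at hkl
    by_contra h
    have left_le := card_add_card_cyclesOn_le hC (left_ne_zero_of_mul (right_ne_zero_of_mul h))
    have right_le := card_add_card_cyclesOn_le hD (right_ne_zero_of_mul (right_ne_zero_of_mul h))
    exact hne (Prod.ext (by lia) (by lia))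
  rw [shuffleCount, sum_eq_single_of_mem (i, j) (by simp) only_minimal]
  push_cast
  rw [formula i (by lia) C σ hC hσC hi, formula j (by lia) D σ hD hσD hj,
    ← Nat.add_choose_mul_factorial_mul_factorial i j, Nat.choose_symm_add]
  push_cast
  ring

lemma prod_cyclesOn_eq_mul_prod_otherCycles (hx : x ∈ B) (hy : y ∈ B) (h : ¬ ρ.SameCycle x y) :
    ∏ c ∈ cyclesOn ρ B, hurwitzWeight #c =
      hurwitzWeight #(cycleSet ρ x) *
        (hurwitzWeight #(cycleSet ρ y) * ∏ c ∈ otherCycles ρ B x y, hurwitzWeight #c) := by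
  have hyx : cycleSet ρ y ≠ cycleSet ρ x := fun h' => h (cycleSet_eq_iff.mp h').symm
  rw [cyclesOn_eq_insert_insert hx hy h, prod_insert, prod_insert]
  · simp [mem_otherCycles]
  · simp [mem_otherCycles, hyx.symm]

lemma hurwitzValue_cyclesOn_swap_mul (hB : Set.MapsTo ρ B B) (hx : x ∈ B) (hy : y ∈ B)
    (h : ¬ ρ.SameCycle x y) :
    hurwitzValue (cyclesOn (swap x y * ρ) B) = (∏ c ∈ cyclesOn ρ B, hurwitzWeight #c) *
      (hurwitzWeight (#(cycleSet ρ x) + #(cycleSet ρ y)) /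
        (hurwitzWeight #(cycleSet ρ x) * hurwitzWeight #(cycleSet ρ y)) *
        (#B : ℚ) ^ ((#(cyclesOn ρ B) : ℤ) - 4)) := by
  have exponent : (#(cyclesOn (swap x y * ρ) B) : ℤ) - 3 = #(cyclesOn ρ B) - 4 := by
    rw [← card_cyclesOn_swap_mul hx hy h]
    push_cast
    ring
  have hwx := hurwitzWeight_ne_zero (card_cycleSet_pos ρ x)
  have hwy := hurwitzWeight_ne_zero (card_cycleSet_pos ρ y)
  rw [hurwitzValue, sum_card_cyclesOn (mapsTo_swap_mul hB (iff_of_true hx hy)), exponent,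
    cyclesOn_swap_mul hx h, prod_insert cycleSet_swap_mul_notMem_otherCycles, cycleSet_swap_mul h,
    card_union_of_disjoint (disjoint_cycleSet h), prod_cyclesOn_eq_mul_prod_otherCycles hx hy h]
  field_simp

lemma factorizationCountCons_of_not_sameCycle (hB : Set.MapsTo σ B B) (hx : x ∈ B) (hy : y ∈ B)
    (h : ¬ σ.SameCycle x y) (hm : m + 3 = #B + #(cyclesOn σ B)) (formula : HurwitzFormula α m) :
    (factorizationCountCons B σ x y m : ℚ) =
      2 ^ m * m.factorial * (∏ c ∈ cyclesOn σ B, hurwitzWeight #c) *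
        (hurwitzWeight (#(cycleSet σ x) + #(cycleSet σ y)) /
          (hurwitzWeight #(cycleSet σ x) * hurwitzWeight #(cycleSet σ y)) *
          (#B : ℚ) ^ ((#(cyclesOn σ B) : ℤ) - 4)) := by
  have card_eq := card_cyclesOn_swap_mul hx hy h
  rw [factorizationCountCons_eq hx hy,
    splitFactorizationCount_of_sameCycle (sameCycle_swap_mul h), add_zero,
    formula B _ ⟨x, hx⟩ (mapsTo_swap_mul hB (iff_of_true hx hy)) (by lia),
    hurwitzValue_cyclesOn_swap_mul hB hx hy h]
  ring

lemma splitFactorizationCount_eq (hB : Set.MapsTo ρ B B) (hx : x ∈ B) (hy : y ∈ B)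
    (h : ¬ ρ.SameCycle x y) (hm : m + 4 = #B + #(cyclesOn ρ B))
    (formula : ∀ k ≤ m, HurwitzFormula α k) :
    (splitFactorizationCount B ρ x y m : ℚ) =
      2 ^ m * m.factorial * ∑ S ∈ (otherCycles ρ B x y).powerset,
        hurwitzValue (insert (cycleSet ρ x) S) *
          hurwitzValue (insert (cycleSet ρ y) (otherCycles ρ B x y \ S)) := by
  rw [splitFactorizationCount, Nat.cast_sum, mul_sum,
    sum_filter_eq_sum_otherCycles hB hx h (fun C => (shuffleCount C (B \ C) ρ m : ℚ))]
  · refine sum_congr rfl fun S hS => ?_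
    have hS := mem_powerset.mp hS
    have hT := insert_cycleSet_subset_cyclesOn hx hS
    have hyx : cycleSet ρ y ≠ cycleSet ρ x := fun h' => h (cycleSet_eq_iff.mp h').symm
    have hyT : cycleSet ρ y ∉ insert (cycleSet ρ x) S := fun hmem =>
      (mem_insert.mp hmem).elim hyx fun h' => (mem_otherCycles.mp (hS h')).1 rfl
    have hC := mapsTo_biUnion_cyclesOn hT
    have hCB := biUnion_subset_of_subset_cyclesOn hB hT
    have hxC := (mem_biUnion_cyclesOn hT).mpr (mem_insert_self _ S)
    have hyD := mem_sdiff.mpr ⟨hy, (mem_biUnion_cyclesOn hT).not.mpr hyT⟩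
    have card_eq := card_sdiff_add_card_eq_card hCB
    have card_cycles := card_cyclesOn_add_sdiff hC hCB
    rw [shuffleCount_eq ⟨x, hxC⟩ ⟨y, hyD⟩ hC (mapsTo_sdiff hB hC) (by lia) formula,
      cyclesOn_biUnion hT, cyclesOn_sdiff_biUnion hx hy h hS]
  · intro C hC
    rw [shuffleCount_eq_zero_of_not_mapsTo hC, Nat.cast_zero]

lemma factorizationCountCons_of_sameCycle (hB : Set.MapsTo σ B B) (hx : x ∈ B) (hy : y ∈ B)
    (hxy : x ≠ y) (h : σ.SameCycle x y) (hm : m + 3 = #B + #(cyclesOn σ B))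
    (formula : ∀ k ≤ m, HurwitzFormula α k) :
    (factorizationCountCons B σ x y m : ℚ) =
      2 ^ m * m.factorial * (∏ c ∈ cyclesOn σ B, hurwitzWeight #c) *
        (1 / hurwitzWeight #(cycleSet σ x) *
          (hurwitzWeight #(cycleSet (swap x y * σ) x) *
            hurwitzWeight #(cycleSet (swap x y * σ) y) *
            subsetConv
              (hurwitzKernel (fun e : Finset α => (#e : ℚ)) #(cycleSet (swap x y * σ) x))
              (hurwitzKernel (fun e : Finset α => (#e : ℚ)) #(cycleSet (swap x y * σ) y))
              ((cyclesOn σ B).erase (cycleSet σ x)))) := by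
  have cut := not_sameCycle_swap_mul hxy h
  have card_eq := card_cyclesOn_swap_mul_of_sameCycle hx hy hxy h
  have others := cyclesOn_swap_mul (B := B) hx cut
  have notMem := cycleSet_swap_mul_notMem_otherCycles (ρ := swap x y * σ) (B := B) (x := x) (y := y)
  rw [swap_mul_self_mul] at others notMem
  have no_connected : factorizationCount B (swap x y * σ) m = 0 := by
    by_contra hne
    have := card_add_card_cyclesOn_le ⟨x, hx⟩ hne
    lia
  have hwx := hurwitzWeight_ne_zero (card_cycleSet_pos σ x)
  rw [factorizationCountCons_eq hx hy, no_connected, zero_add,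
    splitFactorizationCount_eq (mapsTo_swap_mul hB (iff_of_true hx hy)) hx hy cut (by lia) formula,
    sum_hurwitzValue_insert_mul _ (by simp [mem_otherCycles]) (by simp [mem_otherCycles]), others,
    erase_insert notMem, prod_insert notMem]
  field_simp

lemma cyclesOn_sdiff_cycleSet (σ : Perm α) (B : Finset α) (x : α) :
    cyclesOn σ (B \ cycleSet σ x) = (cyclesOn σ B).erase (cycleSet σ x) := by
  have single_cycle : cyclesOn σ (cycleSet σ x) = {cycleSet σ x} := by
    refine eq_singleton_iff_unique_mem.mpr ⟨cycleSet_mem_cyclesOn (self_mem_cycleSet σ x), ?_⟩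
    rintro _ hc
    obtain ⟨z, hz, rfl⟩ := mem_cyclesOn.mp hc
    exact (cycleSet_eq_iff.mpr (mem_cycleSet.mp hz)).symm
  rw [cyclesOn_sdiff (mapsTo_cycleSet σ x), single_cycle, sdiff_singleton_eq_erase]

/-- The contribution to the join–cut recursion of the transpositions that move a given point of the
cycle `c`: they join `c` to another cycle in `T`, or cut `c` into two. -/
def joinCutTerm (T : Finset (Finset α)) (c : Finset α) (n : ℚ) : ℚ :=
  ∑ d ∈ T.erase c, #d * (hurwitzWeight (#c + #d) / (hurwitzWeight #c * hurwitzWeight #d) *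
      n ^ ((#T : ℤ) - 4)) +
    1 / hurwitzWeight #c * ∑ p ∈ HasAntidiagonal.antidiagonal #c,
      hurwitzWeight p.1 * hurwitzWeight p.2 *
        subsetConv (hurwitzKernel (fun e : Finset α => (#e : ℚ)) p.1)
          (hurwitzKernel (fun e : Finset α => (#e : ℚ)) p.2) (T.erase c)

lemma sum_factorizationCountCons (hB : Set.MapsTo σ B B) (hx : x ∈ B)
    (hm : m + 3 = #B + #(cyclesOn σ B)) (formula : ∀ k ≤ m, HurwitzFormula α k) :
    ∑ y ∈ B.erase x, (factorizationCountCons B σ x y m : ℚ) =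
      2 ^ m * m.factorial * (∏ c ∈ cyclesOn σ B, hurwitzWeight #c) *
        joinCutTerm (cyclesOn σ B) (cycleSet σ x) #B := by
  have hsub := cycleSet_subset hB hx
  have sdiff_subset_erase : B \ cycleSet σ x ⊆ B.erase x := fun z hz =>
    mem_erase.mpr ⟨ne_of_mem_of_not_mem (self_mem_cycleSet σ x) (mem_sdiff.mp hz).2 |>.symm,
      (mem_sdiff.mp hz).1⟩
  have cut_points : B.erase x \ (B \ cycleSet σ x) = (cycleSet σ x).erase x := by
    rw [erase_sdiff_comm, Finset.sdiff_sdiff_eq_self hsub]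
  rw [← sum_sdiff sdiff_subset_erase, cut_points, joinCutTerm, mul_add, add_comm]
  congr 1
  · rw [sum_congr rfl fun y hy => factorizationCountCons_of_not_sameCycle hB hx
      (mem_sdiff.mp hy).1 (mem_cycleSet.not.mp (mem_sdiff.mp hy).2) hm (formula m le_rfl),
      ← mul_sum, ← cyclesOn_sdiff_cycleSet, ← sum_cycleSet (mapsTo_sdiff hB (mapsTo_cycleSet σ x))]
  · rw [sum_congr rfl fun y hy => factorizationCountCons_of_sameCycle hB hx
      (hsub (mem_of_mem_erase hy)) (ne_of_mem_erase hy).symm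
      (mem_cycleSet.mp (mem_of_mem_erase hy)) hm formula,
      ← mul_sum, ← mul_sum, ← sum_cut_points σ x (fun a b => hurwitzWeight a * hurwitzWeight b *
        subsetConv (hurwitzKernel (fun e : Finset α => (#e : ℚ)) a)
          (hurwitzKernel (fun e : Finset α => (#e : ℚ)) b) ((cyclesOn σ B).erase (cycleSet σ x)))
        (by simp [hurwitzWeight_zero]) (by simp [hurwitzWeight_zero])]

lemma sum_card_mul_joinCutTerm (hBne : B.Nonempty) (hB : Set.MapsTo σ B B) :
    ∑ c ∈ cyclesOn σ B, (#c : ℚ) * joinCutTerm (cyclesOn σ B) c #B =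
      2 * (#B + #(cyclesOn σ B) - 2) * (#B : ℚ) ^ ((#(cyclesOn σ B) : ℤ) - 3) := by
  rw [joinCut_identity (l := card) (cyclesOn_nonempty hBne) (fun c => card_pos_of_mem_cyclesOn)
    (sum_card_cyclesOn hB).symm, ← sum_add_distrib]
  refine sum_congr rfl fun c _ => ?_
  rw [joinCutTerm, mul_add, mul_sum, ← mul_assoc, mul_one_div]
  congr 1
  refine sum_congr rfl fun d _ => ?_
  ring

theorem hurwitzFormula (m : ℕ) : HurwitzFormula α m := by
  induction m using Nat.strong_induction_on with
  | _ m ih =>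
  intro B σ hBne hB hm
  rcases m with _ | m
  · have := hBne.card_pos
    have := (cyclesOn_nonempty (σ := σ) hBne).card_pos
    obtain ⟨x, rfl⟩ := card_eq_one.mp (show #B = 1 by lia)
    have hfix : σ x = x := mem_singleton.mp (hB (mem_singleton_self x))
    have cycle_eq : cycleSet σ x = {x} :=
      (cycleSet_subset hB (mem_singleton_self x)).antisymm
        (singleton_subset_iff.mpr (self_mem_cycleSet σ x))
    simp [factorizationCount_singleton_zero hfix, hurwitzValue, cyclesOn, cycle_eq, hurwitzWeight]
  · have offDiag_iff : ∀ p, p ∈ B.offDiag ↔ p.1 ∈ B ∧ p.2 ∈ B.erase p.1 := by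
      intro p
      rw [mem_offDiag, mem_erase, ne_comm]
      tauto
    have length_eq : (m : ℚ) + 1 = #B + #(cyclesOn σ B) - 2 := by
      rw [eq_sub_iff_add_eq]
      exact_mod_cast hm
    rw [factorizationCount_succ, Nat.cast_sum,
      sum_finset_product _ B (fun x => B.erase x) offDiag_iff,
      sum_congr rfl fun x hx => sum_factorizationCountCons hB hx (by lia)
        fun k hk => ih k (Nat.lt_succ_of_le hk), ← mul_sum,
      sum_cycleSet hB (fun c => joinCutTerm (cyclesOn σ B) c #B),
      sum_card_mul_joinCutTerm hBne hB, hurwitzValue, sum_card_cyclesOn hB, ← length_eq,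
      Nat.factorial_succ, pow_succ]
    push_cast
    ring

end HurwitzFormula

section Transpositions

variable {α : Type*} [DecidableEq α] {a b x y : α}

lemma swap_eq_swap_iff (hxy : x ≠ y) :
    swap a b = swap x y ↔ (a = x ∧ b = y) ∨ (a = y ∧ b = x) := by
  refine ⟨fun h => ?_, ?_⟩
  · have image_x : swap a b x = y := by rw [h, swap_apply_left]
    have image_y : swap a b y = x := by rw [h, swap_apply_right]
    grind
  · rintro (⟨rfl, rfl⟩ | ⟨rfl, rfl⟩)
    exacts [rfl, swap_comm _ _]

variable [Fintype α]

/-- The set of all transpositions of `α`. -/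
def transpositions (α : Type*) [DecidableEq α] [Fintype α] : Finset (Perm α) :=
  (univ : Finset α).offDiag.image fun p => swap p.1 p.2

lemma mem_transpositions {t : Perm α} : t ∈ transpositions α ↔ t.IsSwap := by
  simp [transpositions, Perm.IsSwap, eq_comm]

lemma sum_offDiag_swap (f : Perm α → ℕ) :
    ∑ p ∈ (univ : Finset α).offDiag, f (swap p.1 p.2) = 2 * ∑ t ∈ transpositions α, f t := by
  rw [transpositions, sum_comp f, ← transpositions, mul_sum]
  refine sum_congr rfl fun t ht => ?_
  obtain ⟨x, y, hxy, rfl⟩ := mem_transpositions.mp ht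
  have fiber : {p ∈ (univ : Finset α).offDiag | swap p.1 p.2 = swap x y} = {(x, y), (y, x)} := by
    ext ⟨a, b⟩
    simp only [mem_filter, mem_offDiag, mem_univ, true_and, swap_eq_swap_iff hxy, mem_insert,
      mem_singleton, Prod.mk.injEq]
    grind
  rw [fiber, card_pair (by simp [hxy]), smul_eq_mul]

lemma wordCount_map_swap (P : List (Perm α) → Prop) (m : ℕ) :
    wordCount (univ : Finset α).offDiag (fun w => P (w.map fun p => swap p.1 p.2)) m =
      2 ^ m * wordCount (transpositions α) P m := by
  classical
  induction m generalizing P with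
  | zero => simp [wordCount_zero]
  | succ m ih =>
    simp only [wordCount_succ, List.map_cons]
    rw [sum_congr rfl fun p _ => ih fun w => P (swap p.1 p.2 :: w),
      sum_offDiag_swap fun t => 2 ^ m * wordCount (transpositions α) (fun w => P (t :: w)) m,
      ← mul_sum]
    ring

end Transpositions

section Transitivity

variable {α : Type*}

/-- The entries of `τ` multiply with `σ` to the identity and generate together with `σ` a transitive
group. -/
def IsTransitiveFactorization (σ : Perm α) (τ : List (Perm α)) : Prop :=
  σ * τ.prod = 1 ∧ ∀ x y : α, ∃ g ∈ Subgroup.closure ({σ} ∪ {t | t ∈ τ}), g x = y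

lemma isTransitiveFactorization_ofFn_iff {m : ℕ} {σ : Perm α} {τ : Fin m → Perm α} :
    IsTransitiveFactorization σ (List.ofFn τ) ↔
      σ * (List.ofFn τ).prod = 1 ∧
        ∀ x y : α, ∃ g ∈ Subgroup.closure ({σ} ∪ Set.range τ), g x = y := by
  have range_eq : Set.range τ = {t | t ∈ List.ofFn τ} := by
    simp only [List.mem_ofFn, Set.ext_iff, Set.mem_range, Set.mem_ofPred_eq, implies_true]
  rw [IsTransitiveFactorization, range_eq]

variable [DecidableEq α] {w : List (α × α)} {C : Finset α} {σ g : Perm α}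

/-- The group generated by the transpositions encoded by the letters of `w`. -/
def swapGroup (w : List (α × α)) : Subgroup (Perm α) :=
  Subgroup.closure {t | t ∈ w.map fun p => swap p.1 p.2}

lemma swap_mem_swapGroup {p : α × α} (hp : p ∈ w) : swap p.1 p.2 ∈ swapGroup w :=
  Subgroup.subset_closure (List.mem_map.mpr ⟨p, hp, rfl⟩)

lemma swapProd_mem_swapGroup (w : List (α × α)) : swapProd w ∈ swapGroup w :=
  list_prod_mem fun _ ht => Subgroup.subset_closure ht

lemma IsSaturated.apply_mem_iff (hC : IsSaturated w C) (hg : g ∈ swapGroup w) (x : α) :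
    g x ∈ C ↔ x ∈ C := by
  induction hg using Subgroup.closure_induction generalizing x with
  | mem g hg =>
    obtain ⟨p, hp, rfl⟩ := List.mem_map.mp hg
    exact ⟨fun hx => by simpa using swap_apply_mem (hC p hp) hx, swap_apply_mem (hC p hp)⟩
  | one => rfl
  | mul g h _ _ hg hh => rw [Perm.mul_apply, hg, hh]
  | inv g _ hg => simpa using (hg (g⁻¹ x)).symm

variable [Fintype α]

lemma isConnectedOn_univ_iff :
    IsConnectedOn w univ ↔ ∀ x y : α, ∃ g ∈ swapGroup w, g x = y := by
  classical
  constructor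
  · intro h x y
    have orbit_eq := h {z | ∃ g ∈ swapGroup w, g x = z} (subset_univ _)
      ⟨x, mem_filter.mpr ⟨mem_univ _, 1, one_mem _, rfl⟩⟩ fun p hp => ?_
    · exact (mem_filter.mp (orbit_eq.symm.subset (mem_univ y))).2
    · have hswap := swap_mem_swapGroup hp
      simp only [mem_filter, mem_univ, true_and]
      constructor
      · rintro ⟨g, hg, hgx⟩
        exact ⟨swap p.1 p.2 * g, mul_mem hswap hg, by rw [Perm.mul_apply, hgx, swap_apply_left]⟩
      · rintro ⟨g, hg, hgx⟩
        exact ⟨swap p.1 p.2 * g, mul_mem hswap hg, by rw [Perm.mul_apply, hgx, swap_apply_right]⟩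
  · rintro h C - ⟨x, hx⟩ hC
    refine eq_univ_of_forall fun y => ?_
    obtain ⟨g, hg, rfl⟩ := h x y
    exact (hC.apply_mem_iff hg x).mpr hx

lemma isTransitiveFactorization_map_swap_iff :
    IsTransitiveFactorization σ (w.map fun p => swap p.1 p.2) ↔ IsFactorization univ σ⁻¹ w := by
  have eqOn_iff : Set.EqOn (swapProd w) ⇑σ⁻¹ ↑(univ : Finset α) ↔ swapProd w = σ⁻¹ := by
    rw [coe_univ, Set.eqOn_univ, Equiv.coe_inj]
  rw [IsTransitiveFactorization, IsFactorization, eqOn_iff, ← mul_eq_one_iff_eq_inv', and_comm,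
    isConnectedOn_univ_iff]
  refine and_congr_left fun prod_eq => ?_
  have mem_group : σ ∈ swapGroup w := by
    rw [eq_inv_of_mul_eq_one_left prod_eq]
    exact inv_mem (swapProd_mem_swapGroup w)
  rw [Subgroup.closure_union, sup_eq_right.mpr]
  · rfl
  · exact (Subgroup.closure_le _).mpr (Set.singleton_subset_iff.mpr mem_group)

end Transitivity

section Partition

variable {α : Type*} [DecidableEq α] [Fintype α] {σ : Perm α} {x : α} {m : ℕ}

lemma cycleSet_eq_support_cycleOf (hx : x ∈ σ.support) : cycleSet σ x = (σ.cycleOf x).support := by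
  ext y
  rw [mem_cycleSet, Perm.mem_support_cycleOf_iff, and_iff_left hx]

lemma cycleSet_eq_singleton (hx : σ x = x) : cycleSet σ x = {x} := by
  ext y
  rw [mem_cycleSet, mem_singleton]
  exact ⟨fun h => (h.eq_of_left hx).symm, fun h => h ▸ Perm.SameCycle.refl σ x⟩

lemma cyclesOn_support (σ : Perm α) :
    cyclesOn σ σ.support = σ.cycleFactorsFinset.image Perm.support := by
  ext c
  rw [mem_cyclesOn, mem_image]
  constructor
  · rintro ⟨x, hx, rfl⟩
    exact ⟨_, Perm.cycleOf_mem_cycleFactorsFinset_iff.mpr hx, (cycleSet_eq_support_cycleOf hx).symm⟩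
  · rintro ⟨g, hg, rfl⟩
    obtain ⟨x, hx⟩ := (Perm.mem_cycleFactorsFinset_iff.mp hg).1.nonempty_support
    have hxσ := Perm.mem_cycleFactorsFinset_support_le hg hx
    refine ⟨x, hxσ, ?_⟩
    rw [cycleSet_eq_support_cycleOf hxσ, ← Perm.cycle_is_cycleOf hx hg]

lemma cyclesOn_compl_support (σ : Perm α) :
    cyclesOn σ σ.supportᶜ = σ.supportᶜ.image singleton :=
  image_congr fun _ hx => cycleSet_eq_singleton (Perm.notMem_support.mp (mem_compl.mp hx))

lemma injOn_support_cycleFactorsFinset (σ : Perm α) :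
    Set.InjOn Perm.support (σ.cycleFactorsFinset : Set (Perm α)) := by
  intro g hg h hh heq
  obtain ⟨x, hx⟩ := (Perm.mem_cycleFactorsFinset_iff.mp hg).1.nonempty_support
  rw [Perm.cycle_is_cycleOf hx hg, Perm.cycle_is_cycleOf (heq ▸ hx) hh]

lemma map_card_cyclesOn_univ (σ : Perm α) :
    (cyclesOn σ univ).val.map card = σ.partition.parts := by
  have disj : Disjoint (cyclesOn σ σ.support) (cyclesOn σ σ.supportᶜ) := by
    rw [compl_eq_univ_sdiff, cyclesOn_sdiff fun x hx => Perm.apply_mem_support.mpr hx]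
    exact disjoint_sdiff
  have union_eq : cyclesOn σ univ = (cyclesOn σ σ.support).disjUnion _ disj := by
    rw [disjUnion_eq_union, cyclesOn, cyclesOn, cyclesOn, ← image_union, union_compl]
  rw [union_eq, disjUnion_val, Multiset.map_add, Perm.parts_partition]
  congr 1
  · rw [cyclesOn_support, image_val_of_injOn (injOn_support_cycleFactorsFinset σ), Multiset.map_map,
      Perm.cycleType_def]
  · rw [cyclesOn_compl_support, image_val_of_injOn singleton_injective.injOn, Multiset.map_map]
    simp [card_compl]

lemma card_cyclesOn_univ (σ : Perm α) : #(cyclesOn σ univ) = σ.partition.parts.card := by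
  rw [← map_card_cyclesOn_univ, Multiset.card_map, card_val]

lemma prod_cyclesOn_univ (σ : Perm α) (f : ℕ → ℚ) :
    ∏ c ∈ cyclesOn σ univ, f #c = (σ.partition.parts.map f).prod := by
  rw [← map_card_cyclesOn_univ, Multiset.map_map]
  rfl

theorem card_transitiveFactorizations [Nonempty α] (σ : Perm α)
    (hm : m + 2 = Fintype.card α + σ.partition.parts.card) :
    (Nat.card {τ : Fin m → Perm α // (∀ i, (τ i).IsSwap) ∧
        IsTransitiveFactorization σ (List.ofFn τ)} : ℚ) =
      m.factorial * (Fintype.card α : ℚ) ^ ((σ.partition.parts.card : ℤ) - 3) *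
        (σ.partition.parts.map hurwitzWeight).prod := by
  have partition_inv : σ⁻¹.partition.parts = σ.partition.parts := by
    simp only [Perm.parts_partition, Perm.cycleType_inv, Perm.support_inv]
  have double_count : factorizationCount univ σ⁻¹ m =
      2 ^ m * wordCount (transpositions α) (IsTransitiveFactorization σ) m := by
    simp only [← wordCount_map_swap, isTransitiveFactorization_map_swap_iff, factorizationCount]
  have hmaps : Set.MapsTo ⇑σ⁻¹ ↑(univ : Finset α) ↑(univ : Finset α) := fun _ _ => mem_univ _
  have formula := hurwitzFormula m univ σ⁻¹ univ_nonempty hmaps (by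
    rw [card_cyclesOn_univ, partition_inv, hm, card_univ])
  rw [double_count, hurwitzValue, sum_card_cyclesOn hmaps, card_cyclesOn_univ,
    prod_cyclesOn_univ _ hurwitzWeight, partition_inv, wordCount_eq_natCard, card_univ] at formula
  simp only [mem_transpositions] at formula
  push_cast at formula
  rw [mul_assoc, mul_right_inj' (by positivity)] at formula
  rw [formula, mul_assoc]

end Partition

section ThreeCycle

variable {α : Type*} [DecidableEq α] [Fintype α] {σ : Perm α} {m n : ℕ}

lemma parts_partition_of_cycleType_eq_three (hσ : σ.cycleType = {3}) :
    σ.partition.parts = {3} + Multiset.replicate (Fintype.card α - 3) 1 := by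
  rw [Perm.parts_partition, hσ, ← Perm.sum_cycleType, hσ, Multiset.sum_singleton]

lemma card_transitiveFactorizations_of_cycleType_eq_three (hσ : σ.cycleType = {3})
    (hm : m + 4 = 2 * Fintype.card α) :
    (Nat.card {τ : Fin m → Perm α // (∀ i, (τ i).IsSwap) ∧
        IsTransitiveFactorization σ (List.ofFn τ)} : ℚ) =
      m.factorial * (Fintype.card α : ℚ) ^ ((Fintype.card α : ℤ) - 5) * (27 / 2) := by
  have three_le : 3 ≤ Fintype.card α := by
    simpa [← Perm.sum_cycleType, hσ] using card_le_univ σ.support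
  have : Nonempty α := Fintype.card_pos_iff.mp (by omega)
  have card_parts : σ.partition.parts.card + 2 = Fintype.card α := by
    rw [parts_partition_of_cycleType_eq_three hσ, Multiset.card_add, Multiset.card_singleton,
      Multiset.card_replicate]
    omega
  have prod_weights : (σ.partition.parts.map hurwitzWeight).prod = 27 / 2 := by
    simp only [parts_partition_of_cycleType_eq_three hσ, Multiset.map_add, Multiset.map_singleton,
      Multiset.map_replicate, Multiset.prod_add, Multiset.prod_singleton, Multiset.prod_replicate,
      hurwitzWeight]
    norm_num [Nat.factorial]
  rw [card_transitiveFactorizations σ (by omega), prod_weights]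
  congr 3
  omega

lemma two_mul_choose_three (hn : 3 ≤ n) :
    ((2 * n.choose 3 : ℕ) : ℚ) = n.factorial / (3 * (n - 3).factorial) := by
  rw [Nat.cast_mul, Nat.cast_choose ℚ hn, show Nat.factorial 3 = 6 from rfl]
  push_cast
  field_simp
  norm_num

lemma natCard_subtype_prod {β γ : Type*} [Fintype β] [Finite γ] (P : β → Prop) [DecidablePred P]
    (Q : β → γ → Prop) :
    Nat.card {p : β × γ // P p.1 ∧ Q p.1 p.2} = ∑ b with P b, Nat.card {c // Q b c} := by
  rw [Nat.card_congr (subtypeProdEquivSigmaSubtype fun b c => P b ∧ Q b c), Nat.card_sigma,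
    sum_filter]
  exact sum_congr rfl fun b _ => by by_cases hb : P b <;> simp [hb]

end ThreeCycle

/-- Genus-zero Hurwitz number h_{2^1}: one branch point of cycle type (3,1^{n-3}) and 2n-4 transpositions; the number of such transitive factorizations of the identity equals n! * (9/2) * ((2n-4)!/(n-3)!) * n^(n-5). -/
theorem hurwitz_number_2_1 (n : ℕ) (hn : 3 ≤ n) :
    (Nat.card {p : Perm (Fin n) × (Fin (2 * n - 4) → Perm (Fin n)) //
        p.1.cycleType = {3} ∧
        (∀ i, (p.2 i).IsSwap) ∧
        p.1 * (List.ofFn p.2).prod = 1 ∧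
        (∀ x y : Fin n, ∃ g ∈ Subgroup.closure ({p.1} ∪ Set.range p.2),
          g x = y)} : ℚ) =
      (n.factorial : ℚ) * (9 / 2) *
        (((2 * n - 4).factorial : ℚ) / ((n - 3).factorial : ℚ)) *
        (n : ℚ) ^ ((n : ℤ) - 5) := by
  have count_τ (σ : Perm (Fin n)) (hσ : σ.cycleType = {3}) :=
    card_transitiveFactorizations_of_cycleType_eq_three (m := 2 * n - 4) hσ
      (by rw [Fintype.card_fin]; omega)
  have count_σ : #{σ : Perm (Fin n) | σ.cycleType = {3}} = 2 * n.choose 3 := by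
    simpa using Perm.card_of_cycleType_singleton (α := Fin n) (n := 3) (by norm_num) (by simpa)
  simp only [← isTransitiveFactorization_ofFn_iff, Fintype.card_fin] at count_τ ⊢
  rw [natCard_subtype_prod (·.cycleType = {3}) fun σ (τ : Fin (2 * n - 4) → Perm (Fin n)) =>
    (∀ i, (τ i).IsSwap) ∧ IsTransitiveFactorization σ (List.ofFn τ), Nat.cast_sum,
    sum_congr rfl fun σ hσ => count_τ σ (mem_filter.mp hσ).2, sum_const, count_σ, nsmul_eq_mul,
    two_mul_choose_three hn]
  field_simp
  norm_num
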